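/- Holevo capacity bounds: for every n-qudit state σ, n log d − H(M(σ)) ≤ χ(E_σ) ≤ n log d − H(σ), where E_σ is the channel ρ ↦ ρ ⊠ σ. Moreover, if σ is a minimal stabilizer-projection state, then χ(E_σ) = n log d − H(σ). -/

import Mathlib

open scoped BigOperators ComplexOrder Classical ENNReal
open Matrix

namespace PaperQI

/-- The computational-basis index set `ℤ_d^n` for an `n`-qudit system. -/
abbrev QV (d n : ℕ) := Fin n → ZMod d

/-- Matrices (linear operators) on the `n`-qudit Hilbert space `(ℂ^d)^{⊗ n}`,
written in the computational basis indexed by `ℤ_d^n`. -/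
abbrev Mat (d n : ℕ) := Matrix (QV d n) (QV d n) ℂ

/-- The character `ξ^z = exp(2πi z/d)` for `z ∈ ℤ_d`. -/
noncomputable def ch (d : ℕ) (z : ZMod d) : ℂ :=
  Complex.exp (2 * Real.pi * Complex.I * (z.val : ℂ) / (d : ℂ))

/-- Dot product on `ℤ_d^n`. -/
def qdot {d n : ℕ} (p k : QV d n) : ZMod d := ∑ i, p i * k i

/-- The `n`-qudit Weyl operator `w(p,q) = ⊗_i ξ^{-2⁻¹ p_i q_i} Z^{p_i} X^{q_i}`
(for odd prime `d`).  Its matrix entries are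
`w(p,q)[k+q, k] = ξ^{p·k + 2⁻¹ p·q}`. -/
noncomputable def weyl (d n : ℕ) [Fact (Nat.Prime d)] (p q : QV d n) : Mat d n :=
  Matrix.of fun k' k =>
    if k' = k + q then ch d (qdot p k + (2 : ZMod d)⁻¹ * qdot p q) else 0

/-- `ρ` is an `n`-qudit state: positive semidefinite with trace one. -/
def IsState (d n : ℕ) [Fact (Nat.Prime d)] (ρ : Mat d n) : Prop :=
  ρ.PosSemidef ∧ ρ.trace = 1

/-- The characteristic function `Ξ_ρ(p,q) = Tr[ρ w(-p,-q)]`. -/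
noncomputable def xi (d n : ℕ) [Fact (Nat.Prime d)] (ρ : Mat d n)
    (pq : QV d n × QV d n) : ℂ :=
  (ρ * weyl d n (-pq.1) (-pq.2)).trace

/-- The mean state `M(ρ) = d^{-n} ∑_{|Ξ_ρ(p,q)| = 1} Ξ_ρ(p,q) w(p,q)`. -/
noncomputable def meanState (d n : ℕ) [Fact (Nat.Prime d)] (ρ : Mat d n) : Mat d n :=
  ((d : ℂ) ^ n)⁻¹ •
    ∑ pq : QV d n × QV d n,
      if ‖xi d n ρ pq‖ = 1 then xi d n ρ pq • weyl d n pq.1 pq.2 else 0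

/-- `ρ` is a minimal stabilizer-projection state (MSPS): for some `r ≤ n` there are
mutually commuting Weyl operators `w(p_i,q_i)`, `i = 1,…,r`, whose labels generate a
subgroup of `V^n` of order `d^r`, and phases `x ∈ ℤ_d^r`, such that
`ρ = d^{-(n-r)} ∏_i ( (1/d) ∑_{k ∈ ℤ_d} (ξ^{x_i} w(p_i,q_i))^k )`. -/
noncomputable def IsMSPS (d n : ℕ) [Fact (Nat.Prime d)] (ρ : Mat d n) : Prop :=
  ∃ r : ℕ, r ≤ n ∧
    ∃ (p q : Fin r → QV d n) (x : Fin r → ZMod d),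
      (∀ i j, Commute (weyl d n (p i) (q i)) (weyl d n (p j) (q j))) ∧
      Nat.card (AddSubgroup.closure (Set.range fun i => (p i, q i)) :
        AddSubgroup (QV d n × QV d n)) = d ^ r ∧
      ρ = ((d : ℂ) ^ (n - r))⁻¹ •
        (List.ofFn fun i =>
          (d : ℂ)⁻¹ • ∑ k : ZMod d, (ch d (x i) • weyl d n (p i) (q i)) ^ k.val).prod

/-- The magic gap `MG(ρ) = 1 - max{|Ξ_ρ(p,q)| : Ξ_ρ(p,q) ≠ 0, |Ξ_ρ(p,q)| ≠ 1}`,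
and `MG(ρ) = 0` if this set is empty. -/
noncomputable def magicGap (d n : ℕ) [Fact (Nat.Prime d)] (ρ : Mat d n) : ℝ :=
  let s : Finset ℝ :=
    (Finset.univ.filter fun pq : QV d n × QV d n =>
      xi d n ρ pq ≠ 0 ∧ ‖xi d n ρ pq‖ ≠ 1).image
      fun pq => ‖xi d n ρ pq‖
  if h : s.Nonempty then 1 - s.max' h else 0

/-- Von Neumann entropy `H(ρ) = -∑ λ_i log λ_i` (natural log, eigenvalues of `ρ`),
with the convention `0 log 0 = 0`; junk value `0` on non-Hermitian matrices. -/
noncomputable def vnEnt {d n : ℕ} [Fact (Nat.Prime d)] (ρ : Mat d n) : ℝ :=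
  if h : ρ.IsHermitian then -∑ i, h.eigenvalues i * Real.log (h.eigenvalues i) else 0

/-- Rényi entropy `H_α` for `α ∈ [0,∞]`:  `H_0 = log rank`, `H_1 = H` (von Neumann),
`H_∞ = -log λ_max`, and `H_α = (1-α)⁻¹ log ∑ λ_i^α` otherwise. -/
noncomputable def renyiEnt {d n : ℕ} [Fact (Nat.Prime d)] (α : ℝ≥0∞) (ρ : Mat d n) : ℝ :=
  if h : ρ.IsHermitian then
    if α = 0 then Real.log (ρ.rank : ℝ)
    else if α = 1 then -∑ i, h.eigenvalues i * Real.log (h.eigenvalues i)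
    else if α = ⊤ then -Real.log (⨆ i, h.eigenvalues i)
    else (1 - α.toReal)⁻¹ * Real.log (∑ i, h.eigenvalues i ^ α.toReal)
  else 0

/-- Matrix logarithm on the support: `log ρ = U diag(log λ_i) U†` via the spectral
decomposition, with `log 0 = 0` on the kernel; junk value `0` off Hermitian matrices. -/
noncomputable def matLog {d n : ℕ} [Fact (Nat.Prime d)] (ρ : Mat d n) : Mat d n :=
  if h : ρ.IsHermitian then
    (h.eigenvectorUnitary : Mat d n) *
      Matrix.diagonal (fun i => (Real.log (h.eigenvalues i) : ℂ)) *
      star (h.eigenvectorUnitary : Mat d n)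
  else 0

/-- Matrix real power on the support: `ρ^t = U diag(λ_i^t) U†`, with `0^t = 0` on the
kernel (for `t ≠ 0`); junk value `0` off Hermitian matrices. -/
noncomputable def matRpow {d n : ℕ} [Fact (Nat.Prime d)] (ρ : Mat d n) (t : ℝ) : Mat d n :=
  if h : ρ.IsHermitian then
    (h.eigenvectorUnitary : Mat d n) *
      Matrix.diagonal (fun i => ((h.eigenvalues i ^ t : ℝ) : ℂ)) *
      star (h.eigenvectorUnitary : Mat d n)
  else 0

/-- Support inclusion `supp ρ ⊆ supp σ`, expressed as `ker σ ⊆ ker ρ`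
(the correct notion for positive semidefinite matrices). -/
def suppLE {d n : ℕ} [Fact (Nat.Prime d)] (ρ σ : Mat d n) : Prop :=
  ∀ v : QV d n → ℂ, σ.mulVec v = 0 → ρ.mulVec v = 0

/-- Relative entropy `D(ρ‖σ) = Tr[ρ(log ρ - log σ)]` when `supp ρ ⊆ supp σ`, else `+∞`. -/
noncomputable def relEnt {d n : ℕ} [Fact (Nat.Prime d)] (ρ σ : Mat d n) : EReal :=
  if suppLE ρ σ then (((ρ * (matLog ρ - matLog σ)).trace.re : ℝ) : EReal) else ⊤

/-- Sandwiched Rényi relative entropy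
`D_α(ρ‖σ) = (α-1)⁻¹ log Tr[(σ^{(1-α)/(2α)} ρ σ^{(1-α)/(2α)})^α]` for `α ≠ 1`
(with `+∞` when `supp ρ ⊄ supp σ`), and `D_1 = D` the relative entropy. -/
noncomputable def sandRenyi {d n : ℕ} [Fact (Nat.Prime d)] (α : ℝ) (ρ σ : Mat d n) :
    EReal :=
  if α = 1 then relEnt ρ σ
  else if suppLE ρ σ then
    let x : ℝ := (α - 1)⁻¹ * Real.log
      ((matRpow (matRpow σ ((1 - α) / (2 * α)) * ρ * matRpow σ ((1 - α) / (2 * α)))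
        α).trace.re)
    (x : EReal)
  else ⊤

/-- The key unitary `U|i,j⟩ = |N g₁₁ i - N g₁₀ j, -N g₀₁ i + N g₀₀ j⟩`,
where `N = (det G)⁻¹` in `ℤ_d`. -/
noncomputable def convU (d n : ℕ) [Fact (Nat.Prime d)] (g00 g01 g10 g11 : ZMod d) :
    Matrix (QV d n × QV d n) (QV d n × QV d n) ℂ :=
  Matrix.of fun kl ij =>
    if kl = ((fun a => (g00 * g11 - g01 * g10)⁻¹ * g11 * ij.1 a
                      - (g00 * g11 - g01 * g10)⁻¹ * g10 * ij.2 a : QV d n),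
             (fun a => -((g00 * g11 - g01 * g10)⁻¹ * g01) * ij.1 a
                      + (g00 * g11 - g01 * g10)⁻¹ * g00 * ij.2 a : QV d n))
    then 1 else 0

/-- Tensor (Kronecker) product of two `n`-qudit operators, on the doubled system. -/
def kron {d n : ℕ} (ρ σ : Mat d n) : Matrix (QV d n × QV d n) (QV d n × QV d n) ℂ :=
  Matrix.of fun ij kl => ρ ij.1 kl.1 * σ ij.2 kl.2

/-- Partial trace over the second `n`-qudit factor. -/
noncomputable def ptrB {d n : ℕ} [Fact (Nat.Prime d)]
    (M : Matrix (QV d n × QV d n) (QV d n × QV d n) ℂ) : Mat d n :=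
  Matrix.of fun i i' => ∑ j : QV d n, M (i, j) (i', j)

/-- The convolution `ρ ⊠ σ = Tr_B[U (ρ ⊗ σ) U†]` with parameter matrix
`G = [g₀₀, g₀₁; g₁₀, g₁₁]`. -/
noncomputable def conv (d n : ℕ) [Fact (Nat.Prime d)] (g00 g01 g10 g11 : ZMod d)
    (ρ σ : Mat d n) : Mat d n :=
  ptrB (convU d n g00 g01 g10 g11 * kron ρ σ * (convU d n g00 g01 g10 g11)ᴴ)

/-- The beam-splitter unitary `U_{s,t}|i,j⟩ = |s i + t j, t i - s j⟩`. -/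
noncomputable def bsU (d n : ℕ) [Fact (Nat.Prime d)] (s t : ZMod d) :
    Matrix (QV d n × QV d n) (QV d n × QV d n) ℂ :=
  Matrix.of fun kl ij =>
    if kl = ((fun a => s * ij.1 a + t * ij.2 a : QV d n),
             (fun a => t * ij.1 a - s * ij.2 a : QV d n))
    then 1 else 0

/-- The beam-splitter convolution `ρ ⊠_{s,t} σ = Tr_B[U_{s,t} (ρ ⊗ σ) U_{s,t}†]`. -/
noncomputable def bsConv (d n : ℕ) [Fact (Nat.Prime d)] (s t : ZMod d)
    (ρ σ : Mat d n) : Mat d n :=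
  ptrB (bsU d n s t * kron ρ σ * (bsU d n s t)ᴴ)

/-- Iterated self-convolution: `⊠^0 ρ = ρ` and `⊠^{N+1} ρ = (⊠^N ρ) ⊠ ρ`. -/
noncomputable def bsIter (d n : ℕ) [Fact (Nat.Prime d)] (s t : ZMod d) :
    ℕ → Mat d n → Mat d n
  | 0, ρ => ρ
  | N + 1, ρ => bsConv d n s t (bsIter d n s t N ρ) ρ

/-- `ρ` is the pure stabilizer state `|ψ⟩⟨ψ|` with stabilizer label group `S ⊆ V^n`:
`S` has order `d^n` and `ψ` is a common eigenvector of all `w(p,q)`, `(p,q) ∈ S`. -/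
noncomputable def IsPureStabilizerWithGroup (d n : ℕ) [Fact (Nat.Prime d)]
    (ρ : Mat d n) (S : AddSubgroup (QV d n × QV d n)) : Prop :=
  Nat.card S = d ^ n ∧
    ∃ ψ : QV d n → ℂ, ψ ≠ 0 ∧
      ρ = Matrix.of (fun a b => ψ a * starRingEnd ℂ (ψ b)) ∧
      ∀ pq ∈ S, ∃ c : ℂ, (weyl d n pq.1 pq.2).mulVec ψ = c • ψ

/-- `ρ` is a pure stabilizer state. -/
noncomputable def IsPureStabilizer (d n : ℕ) [Fact (Nat.Prime d)] (ρ : Mat d n) : Prop :=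
  ∃ S : AddSubgroup (QV d n × QV d n), IsPureStabilizerWithGroup d n ρ S

/-- `ρ` is a stabilizer state: a convex combination of pure stabilizer states. -/
noncomputable def IsStabilizerState (d n : ℕ) [Fact (Nat.Prime d)] (ρ : Mat d n) : Prop :=
  ∃ (m : ℕ) (p : Fin m → ℝ) (τ : Fin m → Mat d n),
    (∀ i, 0 ≤ p i) ∧ ∑ i, p i = 1 ∧ (∀ i, IsPureStabilizer d n (τ i)) ∧
    ρ = ∑ i, (p i : ℂ) • τ i

/-- `U` is a Clifford unitary: a unitary mapping each Weyl operator, under conjugation,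
to a complex phase times a Weyl operator. -/
noncomputable def IsClifford (d n : ℕ) [Fact (Nat.Prime d)] (U : Mat d n) : Prop :=
  U ∈ Matrix.unitaryGroup (QV d n) ℂ ∧
    ∀ pq : QV d n × QV d n, ∃ (c : ℂ) (pq' : QV d n × QV d n),
      ‖c‖ = 1 ∧ U * weyl d n pq.1 pq.2 * Uᴴ = c • weyl d n pq'.1 pq'.2

/-- The divergence-based quantum Fisher information `J(ρ; H) = Tr[ρ [H,[H, log ρ]]]`. -/
noncomputable def fisherJ {d n : ℕ} [Fact (Nat.Prime d)] (ρ H : Mat d n) : ℝ :=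
  (ρ * (H * (H * matLog ρ - matLog ρ * H) - (H * matLog ρ - matLog ρ * H) * H)).trace.re

/-- Embed a single-qudit operator at site `k` of an `n`-qudit system
(tensored with the identity elsewhere). -/
noncomputable def embedAt (d n : ℕ) (k : Fin n) (M : Matrix (ZMod d) (ZMod d) ℂ) :
    Mat d n :=
  Matrix.of fun v w => if ∀ i, i ≠ k → v i = w i then M (v k) (w k) else 0

/-- The rank-one projection `H_j^Z = |j⟩⟨j|` onto the eigenvector of `Z`
with eigenvalue `ξ^j`. -/
noncomputable def projZ (d : ℕ) (j : ZMod d) : Matrix (ZMod d) (ZMod d) ℂ :=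
  Matrix.of fun a b => if a = j ∧ b = j then 1 else 0

/-- The rank-one projection `H_j^X` onto the eigenvector of `X` with eigenvalue `ξ^j`;
its entries are `(H_j^X)_{a b} = d⁻¹ ξ^{j(b-a)}`. -/
noncomputable def projX (d : ℕ) (j : ZMod d) : Matrix (ZMod d) (ZMod d) ℂ :=
  Matrix.of fun a b => (d : ℂ)⁻¹ * ch d (j * (b - a))

/-- Total Fisher information
`J(ρ) = ∑_{k=1}^n ∑_{j ∈ ℤ_d} J(ρ; H_j^{X_k}) + J(ρ; H_j^{Z_k})`. -/
noncomputable def fisherTotal (d n : ℕ) [Fact (Nat.Prime d)] (ρ : Mat d n) : ℝ :=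
  ∑ k : Fin n, ∑ j : ZMod d,
    (fisherJ ρ (embedAt d n k (projX d j)) + fisherJ ρ (embedAt d n k (projZ d j)))

/-- Holevo capacity of a channel `E`:
`χ(E) = sup H(∑ p_i E(ρ_i)) - ∑ p_i H(E(ρ_i))` over finite ensembles of states. -/
noncomputable def holevoCap (d n : ℕ) [Fact (Nat.Prime d)] (E : Mat d n → Mat d n) : ℝ :=
  ⨆ m : ℕ, ⨆ p : Fin m → ℝ, ⨆ ρs : Fin m → Mat d n,
    ⨆ _ : (∀ i, 0 ≤ p i) ∧ ∑ i, p i = 1 ∧ ∀ i, IsState d n (ρs i),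
      (vnEnt (∑ i, (p i : ℂ) • E (ρs i)) - ∑ i, p i * vnEnt (E (ρs i)))

/-- Hilbert–Schmidt norm `‖A‖₂ = (Tr[A†A])^{1/2}`. -/
noncomputable def hsNorm {d n : ℕ} [Fact (Nat.Prime d)] (A : Mat d n) : ℝ :=
  Real.sqrt ((Aᴴ * A).trace.re)

/-- Trace norm `‖A‖₁ = Tr[(A†A)^{1/2}]`. -/
noncomputable def trNorm {d n : ℕ} [Fact (Nat.Prime d)] (A : Mat d n) : ℝ :=
  (matRpow (Aᴴ * A) (2⁻¹ : ℝ)).trace.re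

/-- Tensor product of an `n₁`-qudit operator with an `n₂`-qudit operator,
as an `(n₁+n₂)`-qudit operator. -/
def tensorMat (d n₁ n₂ : ℕ) (ρ₁ : Mat d n₁) (ρ₂ : Mat d n₂) : Mat d (n₁ + n₂) :=
  Matrix.of fun v w =>
    ρ₁ (fun i => v (Fin.castAdd n₂ i)) (fun i => w (Fin.castAdd n₂ i)) *
    ρ₂ (fun j => v (Fin.natAdd n₁ j)) (fun j => w (Fin.natAdd n₁ j))

/-! ### Qubit (`d = 2`) specific definitions -/

/-- The `n`-qubit Weyl (Pauli) operator `w(p,q) = ⊗_i i^{-p_i q_i} Z^{p_i} X^{q_i}`. -/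
noncomputable def weyl2 (n : ℕ) (p q : Fin n → ZMod 2) :
    Matrix (Fin n → ZMod 2) (Fin n → ZMod 2) ℂ :=
  Matrix.of fun k' k =>
    if k' = k + q then
      ∏ i, ((-Complex.I) ^ ((p i).val * (q i).val) *
        (-1 : ℂ) ^ ((p i * (k i + q i)).val))
    else 0

/-- The `n`-qubit characteristic function `Ξ_ρ(p,q) = Tr[ρ w(p,q)†]`. -/
noncomputable def xi2 (n : ℕ) (ρ : Matrix (Fin n → ZMod 2) (Fin n → ZMod 2) ℂ)
    (pq : (Fin n → ZMod 2) × (Fin n → ZMod 2)) : ℂ :=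
  (ρ * (weyl2 n pq.1 pq.2)ᴴ).trace

/-- The logarithmic magic gap
`LMG(ρ) = -log₂ max{|Ξ_ρ(p,q)| : Ξ_ρ(p,q) ≠ 0, |Ξ_ρ(p,q)| ≠ 1}` (`0` if the set is
empty). -/
noncomputable def lmg (n : ℕ) (ρ : Matrix (Fin n → ZMod 2) (Fin n → ZMod 2) ℂ) : ℝ :=
  let s : Finset ℝ :=
    (Finset.univ.filter fun pq : (Fin n → ZMod 2) × (Fin n → ZMod 2) =>
      xi2 n ρ pq ≠ 0 ∧ ‖xi2 n ρ pq‖ ≠ 1).image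
      fun pq => ‖xi2 n ρ pq‖
  if h : s.Nonempty then -Real.logb 2 (s.max' h) else 0

/-- `U` is an `n`-qubit Clifford unitary. -/
noncomputable def IsClifford2 (n : ℕ) (U : Matrix (Fin n → ZMod 2) (Fin n → ZMod 2) ℂ) :
    Prop :=
  U ∈ Matrix.unitaryGroup (Fin n → ZMod 2) ℂ ∧
    ∀ pq : (Fin n → ZMod 2) × (Fin n → ZMod 2),
      ∃ (c : ℂ) (pq' : (Fin n → ZMod 2) × (Fin n → ZMod 2)),
        ‖c‖ = 1 ∧ U * weyl2 n pq.1 pq.2 * Uᴴ = c • weyl2 n pq'.1 pq'.2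

/-- The T gate `diag(1, e^{iπ/4})` acting on qubit `k` of an `n`-qubit system. -/
noncomputable def tGateAt (n : ℕ) (k : Fin n) :
    Matrix (Fin n → ZMod 2) (Fin n → ZMod 2) ℂ :=
  embedAt 2 n k (Matrix.of fun a b =>
    if a = b then (if a = 0 then 1 else Complex.exp (Real.pi * Complex.I / 4)) else 0)

/-- An `n`-qubit state: positive semidefinite with trace one. -/
def IsState2 (n : ℕ) (ρ : Matrix (Fin n → ZMod 2) (Fin n → ZMod 2) ℂ) : Prop :=
  ρ.PosSemidef ∧ ρ.trace = 1

end PaperQI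

namespace PaperQI



section entropy
variable {d n : ℕ} [Fact (Nat.Prime d)]

lemma vnEnt_eq {A : Mat d n} (hA : A.IsHermitian) :
    vnEnt A = ∑ i, Real.negMulLog (hA.eigenvalues i) := by
  rw [vnEnt, dif_pos hA, ← Finset.sum_neg_distrib]
  exact Finset.sum_congr rfl fun i _ => by rw [Real.negMulLog]; ring

lemma diag_eq {A : Mat d n} (hA : A.IsHermitian) :
    (hA.eigenvectorUnitary : Mat d n)ᴴ * A * (hA.eigenvectorUnitary : Mat d n)
      = diagonal (fun i => (hA.eigenvalues i : ℂ)) := by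
  have := hA.conjStarAlgAut_star_eigenvectorUnitary
  rw [Unitary.conjStarAlgAut_star_apply] at this
  exact this

lemma undiag_eq {A : Mat d n} (hA : A.IsHermitian) :
    A = (hA.eigenvectorUnitary : Mat d n) * diagonal (fun i => (hA.eigenvalues i : ℂ)) *
      (hA.eigenvectorUnitary : Mat d n)ᴴ := by
  have := hA.spectral_theorem
  rw [Unitary.conjStarAlgAut_apply] at this
  exact this

lemma unit1 {A : Mat d n} (hA : A.IsHermitian) :
    (hA.eigenvectorUnitary : Mat d n)ᴴ * (hA.eigenvectorUnitary : Mat d n) = 1 :=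
  Unitary.coe_star_mul_self _

lemma unit2 {A : Mat d n} (hA : A.IsHermitian) :
    (hA.eigenvectorUnitary : Mat d n) * (hA.eigenvectorUnitary : Mat d n)ᴴ = 1 :=
  Unitary.coe_mul_star_self _

/-- Entropy does not decrease under positive, trace preserving, unital linear maps. -/
lemma vnEnt_mono (Φ : Mat d n →ₗ[ℂ] Mat d n) (hpos : ∀ A : Mat d n, A.PosSemidef → (Φ A).PosSemidef)
    (htr : ∀ A, (Φ A).trace = A.trace) (hun : Φ 1 = 1) (A : Mat d n) (hA : A.PosSemidef) :
    vnEnt A ≤ vnEnt (Φ A) := by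
  have hB := hpos A hA
  rw [vnEnt_eq hA.1, vnEnt_eq hB.1]
  set U : Mat d n := (hA.1.eigenvectorUnitary : Mat d n) with hU
  set V : Mat d n := (hB.1.eigenvectorUnitary : Mat d n) with hV
  set E : QV d n → Mat d n := fun j => U * Matrix.single j j 1 * Uᴴ with hE
  have hEpos : ∀ j, (E j).PosSemidef := by
    intro j
    refine PosSemidef.mul_mul_conjTranspose_same ?_ _
    have : (Matrix.single j j 1 : Mat d n) = diagonal (fun i => if i = j then 1 else 0) := by
      ext a b
      simp [Matrix.single_apply, diagonal_apply]
      grind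
    rw [this]
    refine PosSemidef.diagonal fun i => ?_
    dsimp only [Pi.zero_apply]
    split_ifs <;> simp
  have hsum1 : ∑ j, E j = 1 := by
    simp only [hE, ← Finset.sum_mul, ← Finset.mul_sum]
    have : ∑ j, (Matrix.single j j 1 : Mat d n) = 1 := by
      rw [Matrix.sum_single_eq_diagonal]; exact diagonal_one
    rw [this, mul_one]; exact unit2 hA.1
  have hAE : A = ∑ j, (hA.1.eigenvalues j : ℂ) • E j := by
    conv_lhs => rw [undiag_eq hA.1]
    rw [← Matrix.sum_single_eq_diagonal]
    simp only [hE, Finset.mul_sum, Finset.sum_mul]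
    refine Finset.sum_congr rfl fun j _ => ?_
    rw [← smul_mul_assoc, ← mul_smul_comm, Matrix.smul_single]; simp; rfl
  have hEtr : ∀ j, (E j).trace = 1 := by
    intro j
    simp only [hE]
    rw [Matrix.trace_mul_comm, ← mul_assoc, unit1 hA.1]; simp
  set D : QV d n → QV d n → ℝ := fun k j => ((Vᴴ * Φ (E j) * V) k k).re with hD
  have hDpos : ∀ k j, 0 ≤ D k j := by
    intro k j
    have := ((hpos _ (hEpos j)).conjTranspose_mul_mul_same V).diag_nonneg (i := k)
    exact (Complex.nonneg_iff.1 this).1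
  have hrow : ∀ k, ∑ j, D k j = 1 := by
    intro k
    have : ∑ j, Vᴴ * Φ (E j) * V = 1 := by
      rw [← Finset.sum_mul, ← Finset.mul_sum, ← map_sum, hsum1, hun, mul_one]
      exact unit1 hB.1
    have h2 := congrFun (congrFun this k) k
    rw [Matrix.sum_apply] at h2
    have h3 := congrArg Complex.re h2
    simpa [hD] using h3
  have hcol : ∀ j, ∑ k, D k j = 1 := by
    intro j
    have : (Vᴴ * Φ (E j) * V).trace = 1 := by
      rw [Matrix.trace_mul_comm, ← mul_assoc, unit2 hB.1, one_mul, htr, hEtr]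
    have h3 := congrArg Complex.re this
    simpa [hD, Matrix.trace] using h3
  have hmu : ∀ k, hB.1.eigenvalues k = ∑ j, D k j * hA.1.eigenvalues j := by
    intro k
    have h1 := congrFun (congrFun (diag_eq hB.1) k) k
    rw [diagonal_apply_eq] at h1
    have h2 : Vᴴ * Φ A * V = ∑ j, (hA.1.eigenvalues j : ℂ) • (Vᴴ * Φ (E j) * V) := by
      conv_lhs => rw [hAE]
      rw [map_sum, Finset.mul_sum, Finset.sum_mul]
      refine Finset.sum_congr rfl fun j _ => ?_
      rw [map_smul, mul_smul_comm, smul_mul_assoc]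
    rw [← hV, h2, Matrix.sum_apply] at h1
    have h3 := congrArg Complex.re h1
    rw [Complex.ofReal_re] at h3
    rw [← h3, Complex.re_sum]
    refine Finset.sum_congr rfl fun j _ => ?_
    rw [Matrix.smul_apply, smul_eq_mul, Complex.re_ofReal_mul, mul_comm]
  calc ∑ j, Real.negMulLog (hA.1.eigenvalues j)
      = ∑ j, ∑ k, D k j * Real.negMulLog (hA.1.eigenvalues j) := by
        refine Finset.sum_congr rfl fun j _ => ?_
        rw [← Finset.sum_mul, hcol, one_mul]
    _ = ∑ k, ∑ j, D k j * Real.negMulLog (hA.1.eigenvalues j) := Finset.sum_comm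
    _ ≤ ∑ k, Real.negMulLog (hB.1.eigenvalues k) := by
        refine Finset.sum_le_sum fun k _ => ?_
        rw [hmu k]
        have := Real.concaveOn_negMulLog.le_map_sum (t := Finset.univ) (w := D k)
          (p := hA.1.eigenvalues) (fun j _ => hDpos k j) (hrow k)
          (fun j _ => hA.eigenvalues_nonneg j)
        simpa [smul_eq_mul] using this

/-- Entropy of a multiple of a projection. -/
lemma vnEnt_proj {A : Mat d n} (hA : A.IsHermitian) (htr : A.trace = 1) (c : ℝ)
    (hsq : A * A = (c : ℂ) • A) : vnEnt A = -Real.log c := by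
  have hev : ∀ i, hA.eigenvalues i = 0 ∨ hA.eigenvalues i = c := by
    intro i
    have h1 := diag_eq hA
    have h2 : diagonal (fun i => (hA.eigenvalues i : ℂ)) * diagonal (fun i => (hA.eigenvalues i : ℂ))
        = (c : ℂ) • (diagonal (fun i => (hA.eigenvalues i : ℂ)) : Mat d n) := by
      rw [← h1]
      calc _ = (hA.eigenvectorUnitary : Mat d n)ᴴ * A * ((hA.eigenvectorUnitary : Mat d n) *
              (hA.eigenvectorUnitary : Mat d n)ᴴ) * A * (hA.eigenvectorUnitary : Mat d n) := by
            simp only [mul_assoc]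
        _ = (hA.eigenvectorUnitary : Mat d n)ᴴ * (A * A) * (hA.eigenvectorUnitary : Mat d n) := by
            rw [unit2, mul_one]; simp only [mul_assoc]
        _ = _ := by rw [hsq, mul_smul_comm, smul_mul_assoc]
    have h3 := congrFun (congrFun h2 i) i
    rw [diagonal_mul_diagonal, Matrix.smul_apply, diagonal_apply_eq, diagonal_apply_eq,
      smul_eq_mul] at h3
    have h4 : hA.eigenvalues i * hA.eigenvalues i = c * hA.eigenvalues i := by exact_mod_cast h3
    by_cases h : hA.eigenvalues i = 0
    · exact Or.inl h
    · exact Or.inr (mul_right_cancel₀ h h4)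
  have hs : ∑ i, hA.eigenvalues i = 1 := by
    have := hA.trace_eq_sum_eigenvalues
    rw [htr] at this
    apply Complex.ofReal_injective
    rw [Complex.ofReal_sum, Complex.ofReal_one]
    exact this.symm
  rw [vnEnt, dif_pos hA, neg_inj]
  calc _ = ∑ i, hA.eigenvalues i * Real.log c := by
        refine Finset.sum_congr rfl fun i _ => ?_
        rcases hev i with h | h <;> rw [h]
        simp
    _ = _ := by rw [← Finset.sum_mul, hs, one_mul]

lemma card_QV : Fintype.card (QV d n) = d ^ n := by
  simp [QV, ZMod.card]

lemma dpos : (0 : ℝ) < d := by exact_mod_cast (Fact.out : Nat.Prime d).pos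

lemma dcne : (d : ℂ) ≠ 0 := by exact_mod_cast (Fact.out : Nat.Prime d).ne_zero

lemma vnEnt_max : vnEnt (((d : ℂ) ^ n)⁻¹ • (1 : Mat d n)) = n * Real.log d := by
  have hr : ((d : ℂ) ^ n)⁻¹ = ((((d : ℝ) ^ n)⁻¹ : ℝ) : ℂ) := by push_cast; rfl
  rw [vnEnt_proj (c := ((d : ℝ) ^ n)⁻¹)]
  · rw [Real.log_inv, Real.log_pow]; ring
  · rw [hr]
    unfold Matrix.IsHermitian
    rw [conjTranspose_smul]; simp
  · rw [trace_smul, trace_one, card_QV]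
    have : (d : ℂ) ≠ 0 := dcne
    simp [this]
  · rw [← hr]; simp

lemma vnEnt_le (A : Mat d n) (hA : IsState d n A) : vnEnt A ≤ n * Real.log d := by
  let Φ : Mat d n →ₗ[ℂ] Mat d n :=
    (Matrix.traceLinearMap (QV d n) ℂ ℂ).smulRight (((d : ℂ) ^ n)⁻¹ • (1 : Mat d n))
  have hΦ : ∀ B, Φ B = B.trace • (((d : ℂ) ^ n)⁻¹ • (1 : Mat d n)) := fun B => rfl
  have hd : (d : ℂ) ≠ 0 := dcne
  have h := vnEnt_mono Φ ?_ ?_ ?_ A hA.1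
  · rwa [hΦ, hA.2, one_smul, vnEnt_max] at h
  · intro B hB
    rw [hΦ, smul_smul]
    refine PosSemidef.smul PosSemidef.one ?_
    refine mul_nonneg hB.trace_nonneg ?_
    have hr : ((d : ℂ) ^ n)⁻¹ = ((((d : ℝ) ^ n)⁻¹ : ℝ) : ℂ) := by push_cast; rfl
    rw [hr]
    exact_mod_cast (by positivity)
  · intro B
    rw [hΦ, trace_smul, trace_smul, trace_one, card_QV]
    simp [hd]
  · rw [hΦ, trace_one, card_QV, smul_smul]
    simp [hd]

end entropy


section weylsec
variable {d n : ℕ} [Fact (Nat.Prime d)]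

lemma ch_eq (z : ZMod d) : ch d z = ZMod.stdAddChar z := by
  rw [ZMod.stdAddChar_apply, ZMod.toCircle_apply, ch]

lemma ch_add (a b : ZMod d) : ch d (a + b) = ch d a * ch d b := by
  simp only [ch_eq, AddChar.map_add_eq_mul]

lemma ch_zero : ch d 0 = 1 := by simp only [ch_eq, AddChar.map_zero_eq_one]

lemma ch_norm (a : ZMod d) : ‖ch d a‖ = 1 := by
  rw [ch_eq, ZMod.stdAddChar_apply]; exact Circle.norm_coe _

lemma ch_neg (a : ZMod d) : ch d (-a) = star (ch d a) := by
  have h : ch d (-a) * ch d a = 1 := by rw [← ch_add, neg_add_cancel, ch_zero]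
  rw [eq_comm]
  calc star (ch d a) = star (ch d a) * (ch d a * ch d (-a)) := by rw [mul_comm (ch d a), h, mul_one]
    _ = (star (ch d a) * ch d a) * ch d (-a) := by ring
    _ = ch d (-a) := by
      have : star (ch d a) * ch d a = 1 := by
        have := Complex.conj_mul' (ch d a)
        rw [ch_norm] at this
        simpa using this
      rw [this, one_mul]

lemma ch_ne (a : ZMod d) : ch d a ≠ 0 := by
  intro h; have := ch_norm a; rw [h] at this; simp at this

lemma ch_inj {a : ZMod d} (h : ch d a = 1) : a = 0 := by
  apply ZMod.injective_stdAddChar (N := d)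
  rw [← ch_eq, h, AddChar.map_zero_eq_one]

lemma qdot_add_left (p p' k : QV d n) : qdot (p + p') k = qdot p k + qdot p' k := by
  simp [qdot, add_mul, Finset.sum_add_distrib]
lemma qdot_add_right (p k k' : QV d n) : qdot p (k + k') = qdot p k + qdot p k' := by
  simp [qdot, mul_add, Finset.sum_add_distrib]
lemma qdot_neg_left (p k : QV d n) : qdot (-p) k = -qdot p k := by simp [qdot]
lemma qdot_neg_right (p k : QV d n) : qdot p (-k) = -qdot p k := by simp [qdot]
lemma qdot_sub_right (p k k' : QV d n) : qdot p (k - k') = qdot p k - qdot p k' := by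
  rw [sub_eq_add_neg, qdot_add_right, qdot_neg_right]; ring
lemma qdot_smul_left (a : ZMod d) (p k : QV d n) : qdot (a • p) k = a * qdot p k := by
  simp [qdot, Finset.mul_sum, mul_assoc]
lemma qdot_smul_right (a : ZMod d) (p k : QV d n) : qdot p (a • k) = a * qdot p k := by
  simp [qdot, Finset.mul_sum]; exact Finset.sum_congr rfl fun i _ => by ring
lemma qdot_zero_left (k : QV d n) : qdot 0 k = 0 := by simp [qdot]
lemma qdot_zero_right (k : QV d n) : qdot k 0 = 0 := by simp [qdot]
lemma qdot_comm (p k : QV d n) : qdot p k = qdot k p := by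
  simp [qdot, mul_comm]

/-- Orthogonality of characters. -/
lemma sum_ch (k : QV d n) : ∑ p : QV d n, ch d (qdot p k) = if k = 0 then (d : ℂ) ^ n else 0 := by
  split_ifs with h
  · subst h
    simp [qdot_zero_right, ch_zero, ZMod.card]
  · obtain ⟨i, hi⟩ : ∃ i, k i ≠ 0 := by
      by_contra hcon; push Not at hcon; exact h (funext hcon)
    set e : QV d n := Pi.single i 1
    have he : qdot e k = k i := by
      simp [qdot, e, Pi.single_apply]
    have h1 : ∑ p : QV d n, ch d (qdot p k) = ch d (k i) * ∑ p : QV d n, ch d (qdot p k) := by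
      rw [Finset.mul_sum, ← Equiv.sum_comp (Equiv.addLeft e)]
      refine Finset.sum_congr rfl fun p _ => ?_
      rw [Equiv.coe_addLeft, qdot_add_left, ch_add, he]
    by_contra hne
    have : ch d (k i) = 1 := by
      have h2 : (ch d (k i) - 1) * ∑ p : QV d n, ch d (qdot p k) = 0 := by
        rw [sub_mul, ← h1]; ring
      rcases mul_eq_zero.1 h2 with h3 | h3
      · exact sub_eq_zero.1 h3
      · exact absurd h3 hne
    exact hi (ch_inj this)

lemma weyl_apply (p q k' k : QV d n) : weyl d n p q k' k =
    if k' = k + q then ch d (qdot p k + (2 : ZMod d)⁻¹ * qdot p q) else 0 := rfl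

lemma two_ne (hd : Odd d) : (2 : ZMod d) ≠ 0 := by
  intro h
  have : ((2 : ℕ) : ZMod d) = 0 := by exact_mod_cast h
  rw [ZMod.natCast_eq_zero_iff] at this
  have h2 := (Nat.prime_dvd_prime_iff_eq (Fact.out : Nat.Prime d) Nat.prime_two).1 this
  subst h2
  exact absurd hd (by decide)

/-- The symplectic form. -/
def symp (u v : QV d n × QV d n) : ZMod d := qdot u.1 v.2 - qdot v.1 u.2

lemma weyl_mul (hd : Odd d) (u v : QV d n × QV d n) :
    weyl d n u.1 u.2 * weyl d n v.1 v.2 =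
      ch d ((2 : ZMod d)⁻¹ * symp u v) • weyl d n (u + v).1 (u + v).2 := by
  have h2 : (2 : ZMod d) ≠ 0 := two_ne hd
  ext k' k
  rw [Matrix.mul_apply, Matrix.smul_apply, Finset.sum_eq_single (k + v.2)]
  · simp only [weyl_apply, if_true, Prod.fst_add, Prod.snd_add, smul_eq_mul]
    by_cases h : k' = k + v.2 + u.2
    · rw [if_pos h, if_pos (by rw [h]; abel), ← ch_add, ← ch_add]
      congr 1
      simp only [qdot_add_left, qdot_add_right, symp]
      have h3 : (2 : ZMod d)⁻¹ * 2 = 1 := inv_mul_cancel₀ h2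
      linear_combination (-(qdot u.1 v.2)) * h3
    · rw [if_neg h, if_neg (by intro h'; apply h; rw [h']; abel)]; simp
  · intro b _ hb
    rw [weyl_apply v.1 v.2, if_neg hb, mul_zero]
  · simp

lemma weyl_zero : weyl d n 0 0 = 1 := by
  ext a b
  simp [weyl_apply, Matrix.one_apply, qdot_zero_left, ch_zero]

lemma weyl_conjTranspose (hd : Odd d) (u : QV d n × QV d n) :
    (weyl d n u.1 u.2)ᴴ = weyl d n (-u).1 (-u).2 := by
  ext a b
  rw [conjTranspose_apply, weyl_apply, weyl_apply]
  by_cases h : b = a + u.2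
  · rw [if_pos h, if_pos (by rw [h]; simp), ← ch_neg]
    congr 1
    subst h
    simp only [Prod.fst_neg, Prod.snd_neg, qdot_neg_left, qdot_neg_right, qdot_add_right]
    have h3 : (2 : ZMod d)⁻¹ * 2 = 1 := inv_mul_cancel₀ (two_ne hd)
    linear_combination (-(qdot u.1 u.2)) * h3
  · rw [if_neg h, if_neg (by intro h'; apply h; rw [h']; simp)]; simp

end weylsec


section stab
variable {d n : ℕ} [Fact (Nat.Prime d)]

lemma weyl_trace (u : QV d n × QV d n) :
    (weyl d n u.1 u.2).trace = if u = 0 then (d : ℂ) ^ n else 0 := by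
  simp only [Matrix.trace, Matrix.diag_apply, weyl_apply]
  by_cases hq : u.2 = 0
  · simp only [hq, add_zero, if_true, qdot_zero_right, mul_zero]
    have : ∑ k : QV d n, ch d (qdot u.1 k) = ∑ k : QV d n, ch d (qdot k u.1) :=
      Finset.sum_congr rfl fun k _ => by rw [qdot_comm]
    rw [this, sum_ch]
    have h2 : (u = 0) ↔ u.1 = 0 := by
      constructor
      · intro h; rw [h]; rfl
      · intro h; exact Prod.ext h hq
    simp only [h2]
  · rw [if_neg (by intro h; apply hq; rw [h]; rfl)]
    refine Finset.sum_eq_zero fun k _ => ?_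
    rw [if_neg]
    intro h
    exact hq (by simpa using h)

/-- Data of a stabilizer group with phases. -/
structure IsStab (S : Finset (QV d n × QV d n)) (c : QV d n × QV d n → ℂ) : Prop where
  zero_mem : 0 ∈ S
  add_mem : ∀ u ∈ S, ∀ v ∈ S, u + v ∈ S
  neg_mem : ∀ u ∈ S, -u ∈ S
  symp : ∀ u ∈ S, ∀ v ∈ S, symp u v = 0
  c_zero : c 0 = 1
  c_add : ∀ u ∈ S, ∀ v ∈ S, c (u + v) = c u * c v
  c_neg : ∀ u ∈ S, c (-u) = star (c u)

/-- The matrix of a stabilizer group with phases. -/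
noncomputable def stabMat (S : Finset (QV d n × QV d n)) (c : QV d n × QV d n → ℂ) : Mat d n :=
  ((d : ℂ) ^ n)⁻¹ • ∑ v ∈ S, c v • weyl d n v.1 v.2

lemma IsStab.herm (hd : Odd d) {S : Finset (QV d n × QV d n)} {c : QV d n × QV d n → ℂ}
    (h : IsStab S c) : (stabMat S c).IsHermitian := by
  unfold Matrix.IsHermitian stabMat
  rw [conjTranspose_smul, conjTranspose_sum]
  congr 1
  · simp
  · refine Finset.sum_nbij' (fun v => -v) (fun v => -v) h.neg_mem h.neg_mem ?_ ?_ ?_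
    · simp
    · simp
    · intro v hv
      rw [conjTranspose_smul, weyl_conjTranspose hd, h.c_neg v hv]

lemma IsStab.trace {S : Finset (QV d n × QV d n)} {c : QV d n × QV d n → ℂ}
    (h : IsStab S c) : (stabMat S c).trace = 1 := by
  unfold stabMat
  have hd : (d : ℂ) ≠ 0 := dcne
  rw [trace_smul, trace_sum, Finset.sum_eq_single 0]
  · rw [trace_smul, weyl_trace, if_pos rfl, h.c_zero]
    simp [hd]
  · intro v _ hv
    rw [trace_smul, weyl_trace, if_neg hv, smul_zero]
  · intro h0; exact absurd h.zero_mem h0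

lemma IsStab.sq (hd : Odd d) {S : Finset (QV d n × QV d n)} {c : QV d n × QV d n → ℂ}
    (h : IsStab S c) : stabMat S c * stabMat S c =
      (((S.card : ℝ) / (d : ℝ) ^ n : ℝ) : ℂ) • stabMat S c := by
  have key : (∑ v ∈ S, c v • weyl d n v.1 v.2) * (∑ v ∈ S, c v • weyl d n v.1 v.2) =
      (S.card : ℂ) • ∑ v ∈ S, c v • weyl d n v.1 v.2 := by
    rw [Finset.sum_mul]
    have : ∀ u ∈ S, (c u • weyl d n u.1 u.2) * (∑ v ∈ S, c v • weyl d n v.1 v.2) =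
        ∑ v ∈ S, c v • weyl d n v.1 v.2 := by
      intro u hu
      rw [Finset.mul_sum]
      refine Finset.sum_nbij' (fun v => u + v) (fun v => -u + v) (fun v hv => h.add_mem u hu v hv)
        (fun v hv => h.add_mem _ (h.neg_mem u hu) v hv) ?_ ?_ ?_
      · simp
      · simp
      · intro v hv
        rw [smul_mul_smul_comm, weyl_mul hd, h.symp u hu v hv, mul_zero, ch_zero, one_smul,
          h.c_add u hu v hv]
    rw [Finset.sum_congr rfl this, Finset.sum_const, ← Nat.cast_smul_eq_nsmul ℂ]
  unfold stabMat
  rw [smul_mul_smul_comm, key, smul_smul, smul_smul]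
  congr 1
  push_cast
  ring

lemma IsStab.card_pos {S : Finset (QV d n × QV d n)} {c : QV d n × QV d n → ℂ}
    (h : IsStab S c) : 0 < S.card := Finset.card_pos.2 ⟨0, h.zero_mem⟩

lemma IsStab.state (hd : Odd d) {S : Finset (QV d n × QV d n)} {c : QV d n × QV d n → ℂ}
    (h : IsStab S c) : IsState d n (stabMat S c) := by
  refine ⟨?_, h.trace⟩
  have hdp : (0 : ℝ) < d := dpos
  have hSp : (0 : ℝ) < S.card := by exact_mod_cast h.card_pos
  set r : ℝ := (S.card : ℝ) / (d : ℝ) ^ n with hr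
  have hrp : 0 < r := by positivity
  have h1 : stabMat S c = ((r⁻¹ : ℝ) : ℂ) • ((stabMat S c)ᴴ * stabMat S c) := by
    rw [h.herm hd, h.sq hd, smul_smul, ← hr, ← Complex.ofReal_mul, inv_mul_cancel₀ hrp.ne']
    simp
  rw [h1]
  refine (posSemidef_conjTranspose_mul_self _).smul ?_
  exact_mod_cast (by positivity)

lemma IsStab.ent (hd : Odd d) {S : Finset (QV d n × QV d n)} {c : QV d n × QV d n → ℂ}
    (h : IsStab S c) : vnEnt (stabMat S c) = -Real.log ((S.card : ℝ) / (d : ℝ) ^ n) :=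
  vnEnt_proj (h.herm hd) h.trace _ (h.sq hd)

/-- Scaling of phase space. -/
def scl (a b : ZMod d) (v : QV d n × QV d n) : QV d n × QV d n := (a • v.1, b • v.2)

lemma scl_add (a b : ZMod d) (u v : QV d n × QV d n) : scl a b (u + v) = scl a b u + scl a b v := by
  simp [scl]
lemma scl_neg (a b : ZMod d) (u : QV d n × QV d n) : scl a b (-u) = - scl a b u := by
  simp [scl]
lemma scl_zero (a b : ZMod d) : scl a b (0 : QV d n × QV d n) = 0 := by
  simp [scl]
lemma scl_scl (a b a' b' : ZMod d) (u : QV d n × QV d n) :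
    scl a b (scl a' b' u) = scl (a * a') (b * b') u := by
  simp [scl, smul_smul]
lemma scl_one (u : QV d n × QV d n) : scl 1 1 u = u := by
  simp [scl]
lemma symp_scl (a b : ZMod d) (u v : QV d n × QV d n) :
    symp (scl a b u) (scl a b v) = a * b * symp u v := by
  simp only [symp, scl, qdot_smul_left, qdot_smul_right]; ring

/-- Pull-back of a stabilizer group under a scaling. -/
noncomputable def pull (a b : ZMod d) (S : Finset (QV d n × QV d n)) :
    Finset (QV d n × QV d n) := Finset.univ.filter fun v => scl a b v ∈ S

lemma mem_pull {a b : ZMod d} {S : Finset (QV d n × QV d n)} {v : QV d n × QV d n} :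
    v ∈ pull a b S ↔ scl a b v ∈ S := by simp [pull]

lemma IsStab.pull {S : Finset (QV d n × QV d n)} {c : QV d n × QV d n → ℂ}
    (h : IsStab S c) {a b : ZMod d} (ha : a ≠ 0) (hb : b ≠ 0) :
    IsStab (pull a b S) (fun v => c (scl a b v)) where
  zero_mem := by rw [mem_pull, scl_zero]; exact h.zero_mem
  add_mem := by
    intro u hu v hv; rw [mem_pull] at *; rw [scl_add]; exact h.add_mem _ hu _ hv
  neg_mem := by
    intro u hu; rw [mem_pull] at *; rw [scl_neg]; exact h.neg_mem _ hu
  symp := by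
    intro u hu v hv; rw [mem_pull] at *
    have := h.symp _ hu _ hv
    rw [symp_scl] at this
    exact (mul_eq_zero.1 this).resolve_left (mul_ne_zero ha hb)
  c_zero := by rw [scl_zero]; exact h.c_zero
  c_add := by
    intro u hu v hv; rw [mem_pull] at *; rw [scl_add]; exact h.c_add _ hu _ hv
  c_neg := by
    intro u hu; rw [mem_pull] at *; rw [scl_neg]; exact h.c_neg _ hu

lemma IsStab.one {S : Finset (QV d n × QV d n)} {c : QV d n × QV d n → ℂ}
    (h : IsStab S c) : IsStab S (fun _ => 1) where
  zero_mem := h.zero_mem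
  add_mem := h.add_mem
  neg_mem := h.neg_mem
  symp := h.symp
  c_zero := rfl
  c_add := by simp
  c_neg := by simp

lemma card_pull {a b : ZMod d} (ha : a ≠ 0) (hb : b ≠ 0) (S : Finset (QV d n × QV d n)) :
    (pull a b S).card = S.card := by
  refine Finset.card_nbij' (scl a b) (scl a⁻¹ b⁻¹) ?_ ?_ ?_ ?_
  · intro v hv; exact mem_pull.1 hv
  · intro v hv
    rw [Finset.mem_coe, mem_pull, scl_scl, mul_inv_cancel₀ ha, mul_inv_cancel₀ hb, scl_one]; exact hv
  · intro v _; rw [scl_scl, inv_mul_cancel₀ ha, inv_mul_cancel₀ hb, scl_one]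
  · intro v _; rw [scl_scl, mul_inv_cancel₀ ha, mul_inv_cancel₀ hb, scl_one]

end stab

section mean
variable {d n : ℕ} [Fact (Nat.Prime d)]

/-- The set where the characteristic function has modulus one. -/
noncomputable def unitSet (σ : Mat d n) : Finset (QV d n × QV d n) :=
  Finset.univ.filter fun v => ‖xi d n σ v‖ = 1

lemma mem_unitSet {σ : Mat d n} {v : QV d n × QV d n} : v ∈ unitSet σ ↔ ‖xi d n σ v‖ = 1 := by
  simp [unitSet]

lemma meanState_eq (σ : Mat d n) : meanState d n σ = stabMat (unitSet σ) (xi d n σ) := by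
  rw [meanState, stabMat, unitSet, Finset.sum_filter]

lemma xi_def (σ : Mat d n) (v : QV d n × QV d n) :
    xi d n σ v = (σ * weyl d n (-v).1 (-v).2).trace := rfl

lemma xi_zero {σ : Mat d n} (hσ : IsState d n σ) : xi d n σ 0 = 1 := by
  rw [xi_def, neg_zero, Prod.fst_zero, Prod.snd_zero, weyl_zero, mul_one, hσ.2]

lemma xi_neg (hd : Odd d) {σ : Mat d n} (hσ : IsState d n σ) (v : QV d n × QV d n) :
    xi d n σ (-v) = star (xi d n σ v) := by
  rw [xi_def, xi_def, ← trace_conjTranspose, conjTranspose_mul, hσ.1.1, weyl_conjTranspose hd,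
    Matrix.trace_mul_comm]

open scoped MatrixOrder in
lemma exists_sqrt {σ : Mat d n} (hσ : σ.PosSemidef) : ∃ B : Mat d n, σ = Bᴴ * B :=
  CStarAlgebra.nonneg_iff_eq_star_mul_self.1 hσ.nonneg

/-- If `|Tr(σ W)| = 1` with `W` unitary, then `W σ = Tr(σ W) σ`. -/
lemma eig_of_norm {σ W : Mat d n} (hσ : IsState d n σ) (hW : Wᴴ * W = 1)
    (h : ‖(σ * W).trace‖ = 1) : W * σ = (σ * W).trace • σ := by
  set c := (σ * W).trace with hc
  obtain ⟨B, hB⟩ := exists_sqrt hσ.1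
  have hcc : star c * c = 1 := by
    have := Complex.conj_mul' c
    rw [h] at this
    simpa using this
  have htr2 : (σ * Wᴴ).trace = star c := by
    rw [hc, ← trace_conjTranspose, conjTranspose_mul, hσ.1.1, Matrix.trace_mul_comm]
  set M : Mat d n := W - c • 1 with hM
  have h0 : ((M * Bᴴ) * (M * Bᴴ)ᴴ).trace = 0 := by
    have h1 : (M * Bᴴ) * (M * Bᴴ)ᴴ = M * σ * Mᴴ := by
      rw [conjTranspose_mul, conjTranspose_conjTranspose, hB]; simp only [mul_assoc]
    have h2 : Mᴴ * M = (1 + star c * c) • 1 - c • Wᴴ - star c • W := by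
      rw [hM, conjTranspose_sub, conjTranspose_smul, conjTranspose_one, sub_mul, mul_sub, mul_sub,
        hW, mul_smul_comm, smul_mul_assoc, smul_mul_smul_comm, mul_one, one_mul, mul_one, add_smul,
        one_smul]
      abel
    rw [h1, mul_assoc, Matrix.trace_mul_comm, mul_assoc, h2, mul_sub, mul_sub, mul_smul_comm,
      mul_smul_comm, mul_smul_comm, mul_one, trace_sub, trace_sub, trace_smul, trace_smul,
      trace_smul, hσ.2, htr2, ← hc, hcc, smul_eq_mul, smul_eq_mul, smul_eq_mul, hcc,
      mul_comm c, hcc]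
    norm_num
  rw [trace_mul_conjTranspose_self_eq_zero_iff] at h0
  have h3 : M * σ = 0 := by rw [hB, ← mul_assoc, h0, zero_mul]
  rw [hM, sub_mul, smul_mul_assoc, one_mul] at h3
  exact sub_eq_zero.1 h3

lemma unitSet_eig (hd : Odd d) {σ : Mat d n} (hσ : IsState d n σ) {v : QV d n × QV d n}
    (hv : v ∈ unitSet σ) : weyl d n (-v).1 (-v).2 * σ = xi d n σ v • σ := by
  refine eig_of_norm hσ ?_ (mem_unitSet.1 hv)
  rw [weyl_conjTranspose hd, weyl_mul hd]
  simp [symp, weyl_zero, ch_zero, qdot_neg_left, qdot_neg_right]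

lemma unitSet_aux (hd : Odd d) {σ : Mat d n} (hσ : IsState d n σ) {u v : QV d n × QV d n}
    (hu : u ∈ unitSet σ) (hv : v ∈ unitSet σ) :
    ch d ((2 : ZMod d)⁻¹ * symp u v) * xi d n σ (u + v) = xi d n σ u * xi d n σ v := by
  have h1 : weyl d n (-u).1 (-u).2 * (weyl d n (-v).1 (-v).2 * σ) =
      (xi d n σ u * xi d n σ v) • σ := by
    rw [unitSet_eig hd hσ hv, mul_smul_comm, unitSet_eig hd hσ hu, smul_smul, mul_comm]
  rw [← mul_assoc, weyl_mul hd] at h1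
  have h2 := congrArg Matrix.trace h1
  rw [smul_mul_assoc, trace_smul, trace_smul, hσ.2, Matrix.trace_mul_comm, smul_eq_mul,
    smul_eq_mul, mul_one] at h2
  rw [← h2, xi_def]
  have h3 : symp (-u) (-v) = symp u v := by
    simp [symp, qdot_neg_left, qdot_neg_right]
  rw [h3, neg_add]

lemma unitSet_stab (hd : Odd d) {σ : Mat d n} (hσ : IsState d n σ) :
    IsStab (unitSet σ) (xi d n σ) := by
  have hs : ∀ u ∈ unitSet σ, ∀ v ∈ unitSet σ, symp u v = 0 := by
    intro u hu v hv
    have h1 := unitSet_aux hd hσ hu hv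
    have h2 := unitSet_aux hd hσ hv hu
    rw [add_comm v u, mul_comm (xi d n σ v), ← h1] at h2
    have hne : xi d n σ (u + v) ≠ 0 := by
      intro h0
      rw [h0, mul_zero] at h1
      have := congrArg norm h1
      rw [norm_mul, mem_unitSet.1 hu, mem_unitSet.1 hv] at this
      simp at this
    have h3 := mul_right_cancel₀ hne h2
    have h4 : ch d (symp u v) = 1 := by
      have h5 : symp u v = (2 : ZMod d)⁻¹ * symp u v + -((2 : ZMod d)⁻¹ * symp v u) := by
        have h6 : symp v u = - symp u v := by simp [symp]
        rw [h6]
        have h3 : (2 : ZMod d)⁻¹ * 2 = 1 := inv_mul_cancel₀ (two_ne hd)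
        linear_combination (-(symp u v)) * h3
      rw [h5, ch_add, ← h3, ← ch_add, add_neg_cancel, ch_zero]
    exact ch_inj h4
  have ha : ∀ u ∈ unitSet σ, ∀ v ∈ unitSet σ, xi d n σ (u + v) = xi d n σ u * xi d n σ v := by
    intro u hu v hv
    rw [← unitSet_aux hd hσ hu hv, hs u hu v hv, mul_zero, ch_zero, one_mul]
  refine ⟨?_, ?_, ?_, hs, xi_zero hσ, ha, fun u _ => xi_neg hd hσ u⟩
  · rw [mem_unitSet, xi_zero hσ, norm_one]
  · intro u hu v hv
    rw [mem_unitSet, ha u hu v hv, norm_mul, mem_unitSet.1 hu, mem_unitSet.1 hv, one_mul]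
  · intro u hu
    rw [mem_unitSet, xi_neg hd hσ, norm_star, mem_unitSet.1 hu]

end mean


section convsec
variable {d n : ℕ} [Fact (Nat.Prime d)]

lemma conv_apply (g00 g01 g10 g11 : ZMod d) (hdet : g00 * g11 - g01 * g10 ≠ 0)
    (ρ σ : Mat d n) (a a' : QV d n) :
    conv d n g00 g01 g10 g11 ρ σ a a' =
      ∑ b : QV d n, ρ (g00 • a + g10 • b) (g00 • a' + g10 • b) *
        σ (g01 • a + g11 • b) (g01 • a' + g11 • b) := by
  have hU : ∀ (kl ij : QV d n × QV d n), convU d n g00 g01 g10 g11 kl ij =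
      if ij = (g00 • kl.1 + g10 • kl.2, g01 • kl.1 + g11 • kl.2) then 1 else 0 := by
    intro kl ij
    have hN : (g00 * g11 - g01 * g10)⁻¹ * (g00 * g11 - g01 * g10) = 1 := inv_mul_cancel₀ hdet
    simp only [convU, Matrix.of_apply]
    congr 1
    rw [eq_iff_iff]
    set N := (g00 * g11 - g01 * g10)⁻¹ with hNdef
    constructor
    · intro h
      obtain ⟨i, j⟩ := ij
      subst h
      refine Prod.ext (funext fun t => ?_) (funext fun t => ?_)
      · simp only [Pi.add_apply, Pi.smul_apply, smul_eq_mul]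
        linear_combination (-(i t)) * hN
      · simp only [Pi.add_apply, Pi.smul_apply, smul_eq_mul]
        linear_combination (-(j t)) * hN
    · intro h
      subst h
      obtain ⟨k, l⟩ := kl
      refine Prod.ext (funext fun t => ?_) (funext fun t => ?_)
      · simp only [Pi.add_apply, Pi.smul_apply, smul_eq_mul]
        linear_combination (-(k t)) * hN
      · simp only [Pi.add_apply, Pi.smul_apply, smul_eq_mul]
        linear_combination (-(l t)) * hN
  simp only [conv, ptrB, Matrix.of_apply]
  refine Finset.sum_congr rfl fun b _ => ?_
  simp only [Matrix.mul_apply, conjTranspose_apply, hU, kron, Matrix.of_apply]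
  simp

/-- Convolution as a bilinear map. -/
noncomputable def convL (g00 g01 g10 g11 : ZMod d) (hdet : g00 * g11 - g01 * g10 ≠ 0) :
    Mat d n →ₗ[ℂ] Mat d n →ₗ[ℂ] Mat d n :=
  LinearMap.mk₂ ℂ (conv d n g00 g01 g10 g11)
    (by
      intro A B C; ext a b
      simp only [conv_apply _ _ _ _ hdet, Matrix.add_apply, add_mul, Finset.sum_add_distrib])
    (by
      intro r A B; ext a b
      simp only [conv_apply _ _ _ _ hdet, Matrix.smul_apply, smul_eq_mul, Finset.mul_sum, mul_assoc])
    (by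
      intro A B C; ext a b
      simp only [conv_apply _ _ _ _ hdet, Matrix.add_apply, mul_add, Finset.sum_add_distrib])
    (by
      intro r A B; ext a b
      simp only [conv_apply _ _ _ _ hdet, Matrix.smul_apply, smul_eq_mul, Finset.mul_sum]
      exact Finset.sum_congr rfl fun _ _ => by ring)

lemma convL_apply (g00 g01 g10 g11 : ZMod d) (hdet : g00 * g11 - g01 * g10 ≠ 0) (ρ σ : Mat d n) :
    convL g00 g01 g10 g11 hdet ρ σ = conv d n g00 g01 g10 g11 ρ σ := rfl

lemma conv_pos (g00 g01 g10 g11 : ZMod d) {ρ σ : Mat d n} (hρ : ρ.PosSemidef)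
    (hσ : σ.PosSemidef) : (conv d n g00 g01 g10 g11 ρ σ).PosSemidef := by
  have hk : (kron ρ σ).PosSemidef := hρ.kronecker hσ
  have h2 := hk.mul_mul_conjTranspose_same (convU d n g00 g01 g10 g11)
  have h3 : conv d n g00 g01 g10 g11 ρ σ = ∑ j : QV d n,
      (convU d n g00 g01 g10 g11 * kron ρ σ * (convU d n g00 g01 g10 g11)ᴴ).submatrix
        (fun i => (i, j)) (fun i => (i, j)) := by
    ext a b
    rw [Matrix.sum_apply]; rfl
  rw [h3]
  exact posSemidef_sum _ fun j _ => h2.submatrix _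

/-- The linear change of variables on pairs. -/
lemma sum_lin (g00 g01 g10 g11 : ZMod d) (hdet : g00 * g11 - g01 * g10 ≠ 0)
    (f : QV d n → QV d n → ℂ) :
    ∑ a : QV d n, ∑ b : QV d n, f (g00 • a + g10 • b) (g01 • a + g11 • b) =
      ∑ i : QV d n, ∑ j : QV d n, f i j := by
  have hN : (g00 * g11 - g01 * g10)⁻¹ * (g00 * g11 - g01 * g10) = 1 := inv_mul_cancel₀ hdet
  set N := (g00 * g11 - g01 * g10)⁻¹ with hNdef
  rw [← Fintype.sum_prod_type', ← Fintype.sum_prod_type']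
  refine Finset.sum_nbij' (fun x => (g00 • x.1 + g10 • x.2, g01 • x.1 + g11 • x.2))
    (fun x => ((N * g11) • x.1 - (N * g10) • x.2, -(N * g01) • x.1 + (N * g00) • x.2)) ?_ ?_ ?_ ?_ ?_
  · simp
  · simp
  · intro x _
    refine Prod.ext (funext fun t => ?_) (funext fun t => ?_)
    · simp only [Pi.add_apply, Pi.sub_apply, Pi.smul_apply, smul_eq_mul]
      linear_combination (x.1 t) * hN
    · simp only [Pi.add_apply, Pi.sub_apply, Pi.smul_apply, smul_eq_mul]
      linear_combination (x.2 t) * hN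
  · intro x _
    refine Prod.ext (funext fun t => ?_) (funext fun t => ?_)
    · simp only [Pi.add_apply, Pi.sub_apply, Pi.smul_apply, smul_eq_mul]
      linear_combination (x.1 t) * hN
    · simp only [Pi.add_apply, Pi.sub_apply, Pi.smul_apply, smul_eq_mul]
      linear_combination (x.2 t) * hN
  · simp

lemma conv_trace (g00 g01 g10 g11 : ZMod d) (hdet : g00 * g11 - g01 * g10 ≠ 0) (ρ σ : Mat d n) :
    (conv d n g00 g01 g10 g11 ρ σ).trace = ρ.trace * σ.trace := by
  simp only [Matrix.trace, Matrix.diag_apply, conv_apply _ _ _ _ hdet]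
  rw [sum_lin _ _ _ _ hdet (fun i j => ρ i i * σ j j), Finset.sum_mul_sum]

/-- Affine change of variable. -/
lemma sum_aff {g : ZMod d} (hg : g ≠ 0) (x : QV d n) (f : QV d n → ℂ) :
    ∑ b : QV d n, f (x + g • b) = ∑ b : QV d n, f b := by
  refine Finset.sum_nbij' (fun b => x + g • b) (fun b => g⁻¹ • (b - x)) (by simp) (by simp) ?_ ?_ ?_
  · intro b _; simp [smul_smul, inv_mul_cancel₀ hg]
  · intro b _; simp [smul_smul, mul_inv_cancel₀ hg]
  · simp

lemma conv_one (g00 g01 g10 g11 : ZMod d) (hdet : g00 * g11 - g01 * g10 ≠ 0) (h01 : g01 ≠ 0)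
    (h10 : g10 ≠ 0) (ρ : Mat d n) : conv d n g00 g01 g10 g11 ρ 1 = ρ.trace • 1 := by
  ext a a'
  rw [conv_apply _ _ _ _ hdet, Matrix.smul_apply, Matrix.one_apply]
  by_cases h : a = a'
  · subst h
    simp only [Matrix.one_apply_eq, mul_one, if_true, smul_eq_mul]
    rw [sum_aff h10 (g00 • a) (fun b => ρ b b)]; rfl
  · rw [if_neg h, smul_zero]
    refine Finset.sum_eq_zero fun b _ => ?_
    rw [Matrix.one_apply_ne, mul_zero]
    intro h2
    exact h (smul_right_injective _ h01 (add_right_cancel h2))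

lemma conv_ent (g00 g01 g10 g11 : ZMod d) (hdet : g00 * g11 - g01 * g10 ≠ 0) (h01 : g01 ≠ 0)
    (h10 : g10 ≠ 0) {ρ σ : Mat d n} (hρ : IsState d n ρ) (hσ : IsState d n σ) :
    vnEnt σ ≤ vnEnt (conv d n g00 g01 g10 g11 ρ σ) := by
  refine vnEnt_mono (convL g00 g01 g10 g11 hdet ρ) ?_ ?_ ?_ σ hσ.1
  · intro A hA; exact conv_pos _ _ _ _ hρ.1 hA
  · intro A; rw [convL_apply, conv_trace _ _ _ _ hdet, hρ.2, one_mul]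
  · rw [convL_apply, conv_one _ _ _ _ hdet h01 h10, hρ.2, one_smul]

lemma conv_state (g00 g01 g10 g11 : ZMod d) (hdet : g00 * g11 - g01 * g10 ≠ 0)
    {ρ σ : Mat d n} (hρ : IsState d n ρ) (hσ : IsState d n σ) :
    IsState d n (conv d n g00 g01 g10 g11 ρ σ) :=
  ⟨conv_pos _ _ _ _ hρ.1 hσ.1, by rw [conv_trace _ _ _ _ hdet, hρ.2, hσ.2, one_mul]⟩

lemma xi_apply (hd : Odd d) (σ : Mat d n) (v : QV d n × QV d n) :
    xi d n σ v = ∑ c : QV d n, σ (c + v.2) c * ch d (-qdot v.1 c - (2 : ZMod d)⁻¹ * qdot v.1 v.2) := by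
  rw [xi_def, Matrix.trace, ← Equiv.sum_comp (Equiv.addRight v.2)]
  refine Finset.sum_congr rfl fun c _ => ?_
  rw [Matrix.diag_apply, Matrix.mul_apply, Finset.sum_eq_single c]
  · rw [weyl_apply, if_pos (by simp)]
    congr 2
    simp only [Prod.fst_neg, Prod.snd_neg, qdot_neg_left, qdot_neg_right, Equiv.coe_addRight,
      qdot_add_right]
    have h3 : (2 : ZMod d)⁻¹ * 2 = 1 := inv_mul_cancel₀ (two_ne hd)
    linear_combination (qdot v.1 v.2) * h3
  · intro b _ hb
    rw [weyl_apply, if_neg, mul_zero]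
    intro h; apply hb; rw [h]; simp
  · simp

/-- Convolution of a Weyl operator with a state. -/
lemma conv_weyl (hd : Odd d) (g00 g01 g10 g11 : ZMod d) (hdet : g00 * g11 - g01 * g10 ≠ 0)
    (h00 : g00 ≠ 0) (h11 : g11 ≠ 0) (σ : Mat d n) (v : QV d n × QV d n) :
    conv d n g00 g01 g10 g11
      (weyl d n (((g00 * g11 - g01 * g10)⁻¹ * g11) • v.1) (g00 • v.2)) σ =
      xi d n σ (scl (-((g00 * g11 - g01 * g10)⁻¹ * g10)) g01 v) • weyl d n v.1 v.2 := by
  have hN : (g00 * g11 - g01 * g10)⁻¹ * (g00 * g11 - g01 * g10) = 1 := inv_mul_cancel₀ hdet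
  set N := (g00 * g11 - g01 * g10)⁻¹ with hNdef
  ext a a'
  rw [conv_apply _ _ _ _ hdet, Matrix.smul_apply, weyl_apply]
  by_cases h : a = a' + v.2
  · rw [if_pos h, xi_apply hd, smul_eq_mul, Finset.sum_mul]
    refine Eq.trans ?_ (sum_aff h11 (g01 • a') _)
    refine Finset.sum_congr rfl fun b _ => ?_
    subst h
    rw [weyl_apply, if_pos (by rw [smul_add]; abel), mul_comm, mul_assoc, ← ch_add]
    congr 2
    · simp only [scl, smul_add]; abel
    · simp only [scl, qdot_smul_left, qdot_smul_right, qdot_add_right]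
      linear_combination (qdot v.1 a' + (2 : ZMod d)⁻¹ * qdot v.1 v.2) * hN
  · rw [if_neg h, smul_zero]
    refine Finset.sum_eq_zero fun b _ => ?_
    rw [weyl_apply, if_neg, zero_mul]
    intro h2
    apply h
    apply smul_right_injective _ h00
    simp only [smul_add]
    rw [add_right_comm] at h2
    exact add_right_cancel h2

end convsec


section final
variable {d n : ℕ} [Fact (Nat.Prime d)]

lemma weyl_conj_apply (v : QV d n × QV d n) (ρ : Mat d n) (k k' : QV d n) :
    (weyl d n v.1 v.2 * ρ * (weyl d n v.1 v.2)ᴴ) k k' =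
      ch d (qdot v.1 (k - k')) * ρ (k - v.2) (k' - v.2) := by
  have hw : ∀ a b, weyl d n v.1 v.2 a b =
      if b = a - v.2 then ch d (qdot v.1 (a - v.2) + (2 : ZMod d)⁻¹ * qdot v.1 v.2) else 0 := by
    intro a b
    rw [weyl_apply]
    by_cases h : a = b + v.2
    · rw [if_pos h, if_pos (by rw [h]; simp), h]; simp
    · rw [if_neg h, if_neg (by intro h'; apply h; rw [h']; simp)]
  simp only [Matrix.mul_apply, conjTranspose_apply, hw]
  rw [Finset.sum_eq_single (k' - v.2), Finset.sum_eq_single (k - v.2)]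
  · rw [if_pos rfl, if_pos rfl, ← ch_neg, mul_right_comm, ← ch_add]
    congr 2
    simp only [qdot_sub_right]; ring
  · intro b _ hb; rw [if_neg hb, zero_mul]
  · simp
  · intro b _ hb; rw [if_neg hb, star_zero, mul_zero]
  · simp

lemma conv_cov (g00 g01 g10 g11 : ZMod d) (hdet : g00 * g11 - g01 * g10 ≠ 0)
    (ρ σ : Mat d n) (v : QV d n × QV d n) :
    conv d n g00 g01 g10 g11 (weyl d n v.1 v.2 * ρ * (weyl d n v.1 v.2)ᴴ) σ =
      weyl d n (scl g00 ((g00 * g11 - g01 * g10)⁻¹ * g11) v).1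
        (scl g00 ((g00 * g11 - g01 * g10)⁻¹ * g11) v).2 *
        conv d n g00 g01 g10 g11 ρ σ *
      (weyl d n (scl g00 ((g00 * g11 - g01 * g10)⁻¹ * g11) v).1
        (scl g00 ((g00 * g11 - g01 * g10)⁻¹ * g11) v).2)ᴴ := by
  have hN : (g00 * g11 - g01 * g10)⁻¹ * (g00 * g11 - g01 * g10) = 1 := inv_mul_cancel₀ hdet
  set N := (g00 * g11 - g01 * g10)⁻¹ with hNdef
  ext a a'
  rw [weyl_conj_apply, conv_apply _ _ _ _ hdet, conv_apply _ _ _ _ hdet, Finset.mul_sum]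
  refine Eq.trans ?_ (Equiv.sum_comp (Equiv.addRight ((N * g01) • v.2)) _)
  refine Finset.sum_congr rfl fun b _ => ?_
  rw [weyl_conj_apply, mul_assoc]
  have e1 : ∀ x : QV d n, g00 • x + g10 • b - v.2 =
      g00 • (x - (scl g00 (N * g11) v).2) + g10 • (Equiv.addRight ((N * g01) • v.2) b) := by
    intro x; ext t
    simp only [scl, Equiv.coe_addRight, Pi.add_apply, Pi.sub_apply, Pi.smul_apply, smul_eq_mul]
    linear_combination (v.2 t) * hN
  have e2 : ∀ x : QV d n, g01 • x + g11 • b =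
      g01 • (x - (scl g00 (N * g11) v).2) + g11 • (Equiv.addRight ((N * g01) • v.2) b) := by
    intro x; ext t
    simp only [scl, Equiv.coe_addRight, Pi.add_apply, Pi.sub_apply, Pi.smul_apply, smul_eq_mul]
    ring
  rw [← e1, ← e1, ← e2, ← e2]
  congr 2
  rw [add_sub_add_right_eq_sub, ← smul_sub, qdot_smul_right]
  simp only [scl, qdot_smul_left]

lemma weyl_avg {a b : ZMod d} (ha : a ≠ 0) (hb : b ≠ 0) (B : Mat d n) :
    ∑ v : QV d n × QV d n, weyl d n (scl a b v).1 (scl a b v).2 * B *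
      (weyl d n (scl a b v).1 (scl a b v).2)ᴴ = ((d : ℂ) ^ n * B.trace) • 1 := by
  ext k k'
  rw [Matrix.sum_apply, Matrix.smul_apply, Matrix.one_apply,
    Finset.sum_congr rfl (fun v _ => weyl_conj_apply (scl a b v) B k k'), Fintype.sum_prod_type]
  simp only [scl]
  by_cases h : k = k'
  · subst h
    have : ∑ q : QV d n, B (k - b • q) (k - b • q) = B.trace := by
      have := sum_aff (neg_ne_zero.2 hb) k (fun x => B x x)
      simp only [neg_smul, ← sub_eq_add_neg] at this
      rw [this]; rfl
    simp [qdot_zero_right, ch_zero, this, ZMod.card]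
  · rw [if_neg h, smul_zero]
    rw [Finset.sum_comm]
    refine Finset.sum_eq_zero fun q _ => ?_
    rw [← Finset.sum_mul]
    have : ∑ p : QV d n, ch d (qdot (a • p) (k - k')) = 0 := by
      have h2 : ∀ p : QV d n, ch d (qdot (a • p) (k - k')) = ch d (qdot p (a • (k - k'))) := by
        intro p; rw [qdot_smul_left, qdot_smul_right]
      simp only [h2]
      rw [sum_ch, if_neg]
      exact smul_ne_zero ha (sub_ne_zero.2 h)
    rw [this, zero_mul]

lemma weyl_unit (hd : Odd d) (v : QV d n × QV d n) :
    (weyl d n v.1 v.2)ᴴ * weyl d n v.1 v.2 = 1 := by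
  rw [weyl_conjTranspose hd, weyl_mul hd]
  simp [symp, weyl_zero, ch_zero, qdot_neg_left, qdot_neg_right]

lemma conj_state (hd : Odd d) {ρ : Mat d n} (hρ : IsState d n ρ) (v : QV d n × QV d n) :
    IsState d n (weyl d n v.1 v.2 * ρ * (weyl d n v.1 v.2)ᴴ) :=
  ⟨hρ.1.mul_mul_conjTranspose_same _, by
    rw [Matrix.trace_mul_comm, ← mul_assoc, weyl_unit hd, one_mul, hρ.2]⟩

lemma conj_ent (hd : Odd d) {A : Mat d n} (hA : IsState d n A) (c : ℝ)
    (hsq : A * A = (c : ℂ) • A) (v : QV d n × QV d n) :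
    vnEnt (weyl d n v.1 v.2 * A * (weyl d n v.1 v.2)ᴴ) = -Real.log c := by
  have h := conj_state hd hA v
  refine vnEnt_proj h.1.1 h.2 c ?_
  calc _ = weyl d n v.1 v.2 * A * ((weyl d n v.1 v.2)ᴴ * weyl d n v.1 v.2) * A *
        (weyl d n v.1 v.2)ᴴ := by simp only [mul_assoc]
    _ = weyl d n v.1 v.2 * (A * A) * (weyl d n v.1 v.2)ᴴ := by
        rw [weyl_unit hd, mul_one]; simp only [mul_assoc]
    _ = _ := by rw [hsq, mul_smul_comm, smul_mul_assoc]

lemma state_sum {m : ℕ} {p : Fin m → ℝ} {A : Fin m → Mat d n} (hp : ∀ i, 0 ≤ p i)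
    (hs : ∑ i, p i = 1) (hA : ∀ i, IsState d n (A i)) : IsState d n (∑ i, (p i : ℂ) • A i) := by
  refine ⟨posSemidef_sum _ fun i _ => (hA i).1.smul (by exact_mod_cast hp i), ?_⟩
  rw [trace_sum]
  simp only [trace_smul, (hA _).2, smul_eq_mul, mul_one]
  rw [← Complex.ofReal_sum, hs, Complex.ofReal_one]

section cap
lemma cap_le (E : Mat d n → Mat d n) (B : ℝ) (hB : 0 ≤ B)
    (h : ∀ (m : ℕ) (p : Fin m → ℝ) (ρs : Fin m → Mat d n),
      ((∀ i, 0 ≤ p i) ∧ ∑ i, p i = 1 ∧ ∀ i, IsState d n (ρs i)) →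
        vnEnt (∑ i, (p i : ℂ) • E (ρs i)) - ∑ i, p i * vnEnt (E (ρs i)) ≤ B) : holevoCap d n E ≤ B :=
  Real.iSup_le (fun m => Real.iSup_le (fun p => Real.iSup_le (fun ρs =>
    Real.iSup_le (fun hh => h m p ρs hh) hB) hB) hB) hB

lemma le_cap (E : Mat d n → Mat d n) (B : ℝ) (hB : 0 ≤ B)
    (h : ∀ (m : ℕ) (p : Fin m → ℝ) (ρs : Fin m → Mat d n),
      ((∀ i, 0 ≤ p i) ∧ ∑ i, p i = 1 ∧ ∀ i, IsState d n (ρs i)) →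
        vnEnt (∑ i, (p i : ℂ) • E (ρs i)) - ∑ i, p i * vnEnt (E (ρs i)) ≤ B)
    (m : ℕ) (p : Fin m → ℝ) (ρs : Fin m → Mat d n)
    (hh : (∀ i, 0 ≤ p i) ∧ ∑ i, p i = 1 ∧ ∀ i, IsState d n (ρs i)) :
    vnEnt (∑ i, (p i : ℂ) • E (ρs i)) - ∑ i, p i * vnEnt (E (ρs i)) ≤ holevoCap d n E := by
  have b4 : ∀ (m : ℕ) (p : Fin m → ℝ) (ρs : Fin m → Mat d n), (⨆ _ : (∀ i, 0 ≤ p i) ∧ ∑ i, p i = 1 ∧ ∀ i, IsState d n (ρs i),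
      (vnEnt (∑ i : Fin m, (p i : ℂ) • E (ρs i)) - ∑ i, p i * vnEnt (E (ρs i)))) ≤ B :=
    fun m p ρs => Real.iSup_le (fun hh => h m p ρs hh) hB
  have b3 := fun m p => Real.iSup_le (fun ρs => b4 m p ρs) hB
  have b2 := fun m => Real.iSup_le (fun p => b3 m p) hB
  refine le_ciSup_of_le ⟨B, ?_⟩ m (le_ciSup_of_le ⟨B, ?_⟩ p (le_ciSup_of_le ⟨B, ?_⟩ ρs
    (le_ciSup_of_le ⟨B, ?_⟩ hh le_rfl)))
  · rintro _ ⟨i, rfl⟩; exact b2 i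
  · rintro _ ⟨i, rfl⟩; exact b3 m i
  · rintro _ ⟨i, rfl⟩; exact b4 m p i
  · rintro _ ⟨i, rfl⟩; exact h m p ρs i

lemma le_cap' (E : Mat d n → Mat d n) (B : ℝ) (hB : 0 ≤ B)
    (h : ∀ (m : ℕ) (p : Fin m → ℝ) (ρs : Fin m → Mat d n),
      ((∀ i, 0 ≤ p i) ∧ ∑ i, p i = 1 ∧ ∀ i, IsState d n (ρs i)) →
        vnEnt (∑ i, (p i : ℂ) • E (ρs i)) - ∑ i, p i * vnEnt (E (ρs i)) ≤ B)
    {ι : Type} [Fintype ι] (p : ι → ℝ) (ρs : ι → Mat d n)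
    (hp : ∀ i, 0 ≤ p i) (hs : ∑ i, p i = 1) (hρ : ∀ i, IsState d n (ρs i)) :
    vnEnt (∑ i, (p i : ℂ) • E (ρs i)) - ∑ i, p i * vnEnt (E (ρs i)) ≤ holevoCap d n E := by
  let e := (Fintype.equivFin ι).symm
  have := le_cap E B hB h _ (fun i => p (e i)) (fun i => ρs (e i))
    ⟨fun i => hp _, by rw [Equiv.sum_comp e p, hs], fun i => hρ _⟩
  rwa [Equiv.sum_comp e (fun i => (p i : ℂ) • E (ρs i)),
    Equiv.sum_comp e (fun i => p i * vnEnt (E (ρs i)))] at this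

end cap

section lists
variable {R : Type*} [Monoid R]

lemma list_absorb (l : List R) (hc : ∀ a ∈ l, ∀ b ∈ l, Commute a b) (hi : ∀ a ∈ l, a * a = a)
    (a : R) (ha : a ∈ l) : a * l.prod = l.prod := by
  induction l with
  | nil => simp at ha
  | cons b l ih =>
    rw [List.prod_cons]
    rcases List.mem_cons.1 ha with h | h
    · subst h
      rw [← mul_assoc, hi a (by simp)]
    · rw [← mul_assoc, (hc a (List.mem_cons_of_mem _ h) b (by simp)).eq, mul_assoc, ih]
      · intro x hx y hy; exact hc x (List.mem_cons_of_mem _ hx) y (List.mem_cons_of_mem _ hy)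
      · intro x hx; exact hi x (List.mem_cons_of_mem _ hx)
      · exact h

lemma list_fix (l : List R) (X : R) (h : ∀ a ∈ l, a * X = X) : l.prod * X = X := by
  induction l with
  | nil => simp
  | cons b l ih =>
    rw [List.prod_cons, mul_assoc, ih, h b (by simp)]
    intro a ha; exact h a (List.mem_cons_of_mem _ ha)

lemma list_idem (l : List R) (hc : ∀ a ∈ l, ∀ b ∈ l, Commute a b) (hi : ∀ a ∈ l, a * a = a) :
    l.prod * l.prod = l.prod :=
  list_fix l _ fun a ha => list_absorb l hc hi a ha

end lists

lemma weyl_pow (hd : Odd d) (v : QV d n × QV d n) (k : ℕ) :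
    weyl d n v.1 v.2 ^ k = weyl d n (k • v).1 (k • v).2 := by
  induction k with
  | zero => simp [weyl_zero]
  | succ k ih =>
    rw [pow_succ, ih, weyl_mul hd, succ_nsmul]
    have : symp (k • v) v = 0 := by
      have h : k • v = scl (k : ZMod d) (k : ZMod d) v := by
        simp [scl, Prod.ext_iff, Nat.cast_smul_eq_nsmul]
      rw [h]
      simp only [symp, scl, qdot_smul_left, qdot_smul_right]; ring
    rw [this, mul_zero, ch_zero, one_smul]

lemma phase_weyl_pow (hd : Odd d) (x : ZMod d) (v : QV d n × QV d n) :
    (ch d x • weyl d n v.1 v.2) ^ d = 1 := by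
  have h1 : ch d x ^ d = 1 := by
    rw [ch_eq, ← AddChar.map_nsmul_eq_pow]; simp
  have h2 : d • v = 0 := by
    ext t <;> simp
  rw [smul_pow, h1, weyl_pow hd, h2, one_smul]; exact weyl_zero

/-- The averaged projection. -/
noncomputable def avgP (W : Mat d n) : Mat d n := (d : ℂ)⁻¹ • ∑ k : ZMod d, W ^ k.val

lemma avgP_fix {W : Mat d n} (hW : W ^ d = 1) : W * avgP W = avgP W := by
  have hmod : ∀ k : ℕ, W ^ k = W ^ (k % d) := by
    intro k
    conv_lhs => rw [← Nat.mod_add_div k d, pow_add, pow_mul, hW, one_pow, mul_one]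
  rw [avgP, mul_smul_comm, Finset.mul_sum]
  congr 1
  refine Eq.trans ?_ (Equiv.sum_comp (Equiv.addLeft (1 : ZMod d)) _)
  refine Finset.sum_congr rfl fun k _ => ?_
  have hp : Fact (1 < d) := ⟨(Fact.out : Nat.Prime d).one_lt⟩
  rw [Equiv.coe_addLeft, ZMod.val_add, ← hmod, ZMod.val_one, pow_add, pow_one]

lemma avgP_idem {W : Mat d n} (hW : W ^ d = 1) : avgP W * avgP W = avgP W := by
  have h : ∀ k : ℕ, W ^ k * avgP W = avgP W := by
    intro k
    induction k with
    | zero => simp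
    | succ k ih => rw [pow_succ, mul_assoc, avgP_fix hW, ih]
  conv_lhs => enter [1]; rw [avgP]
  rw [smul_mul_assoc, Finset.sum_mul]
  simp only [h]
  have hd : (d : ℂ) ≠ 0 := dcne
  rw [Finset.sum_const, Finset.card_univ, ZMod.card, ← Nat.cast_smul_eq_nsmul ℂ, smul_smul,
    inv_mul_cancel₀ hd, one_smul]

lemma avgP_comm {W W' : Mat d n} (h : Commute W W') : Commute (avgP W) (avgP W') := by
  unfold avgP
  refine Commute.smul_left (Commute.smul_right ?_ _) _
  exact Commute.sum_left _ _ _ fun i _ => Commute.sum_right _ _ _ fun j _ => h.pow_pow _ _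

lemma msps_ent (hd : Odd d) {σ : Mat d n} (hσ : IsState d n σ) (h : IsMSPS d n σ) :
    vnEnt (meanState d n σ) ≤ vnEnt σ := by
  obtain ⟨r, hr, p, q, x, hcomm, hcard, hσe⟩ := h
  set W : Fin r → Mat d n := fun i => ch d (x i) • weyl d n (p i) (q i) with hW
  have hWd : ∀ i, W i ^ d = 1 := fun i => phase_weyl_pow hd (x i) (p i, q i)
  set l : List (Mat d n) := List.ofFn fun i => avgP (W i) with hl
  have hσ2 : σ = ((d : ℂ) ^ (n - r))⁻¹ • l.prod := hσe
  have hlc : ∀ a ∈ l, ∀ b ∈ l, Commute a b := by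
    intro a ha b hb
    rw [hl, List.mem_ofFn] at ha hb
    obtain ⟨i, rfl⟩ := ha
    obtain ⟨j, rfl⟩ := hb
    exact avgP_comm (((hcomm i j).smul_left _).smul_right _)
  have hli : ∀ a ∈ l, a * a = a := by
    intro a ha
    rw [hl, List.mem_ofFn] at ha
    obtain ⟨i, rfl⟩ := ha
    exact avgP_idem (hWd i)
  have hdp : (0 : ℝ) < d := dpos
  have hent : vnEnt σ = -Real.log (((d : ℝ) ^ (n - r))⁻¹) := by
    refine vnEnt_proj hσ.1.1 hσ.2 _ ?_
    rw [hσ2, smul_mul_smul_comm, list_idem l hlc hli, smul_smul]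
    push_cast; rfl
  have hfix : ∀ i, W i * σ = σ := by
    intro i
    have hm : avgP (W i) ∈ l := by rw [hl, List.mem_ofFn]; exact ⟨i, rfl⟩
    rw [hσ2, mul_smul_comm, ← list_absorb l hlc hli _ hm, ← mul_assoc, avgP_fix (hWd i)]
  have hst := unitSet_stab hd hσ
  have hmem : ∀ i, (p i, q i) ∈ unitSet σ := by
    intro i
    have h1 : -(p i, q i) ∈ unitSet σ := by
      rw [mem_unitSet, xi_def, neg_neg]
      have h2 := congrArg Matrix.trace (hfix i)
      rw [hW, smul_mul_assoc, trace_smul, hσ.2, Matrix.trace_mul_comm, smul_eq_mul] at h2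
      have h3 := congrArg norm h2
      rw [norm_mul, ch_norm, one_mul, norm_one] at h3
      exact h3
    have := hst.neg_mem _ h1
    rwa [neg_neg] at this
  let G : AddSubgroup (QV d n × QV d n) :=
    { carrier := (unitSet σ : Set (QV d n × QV d n))
      zero_mem' := hst.zero_mem
      add_mem' := fun {u v} hu hv => hst.add_mem u hu v hv
      neg_mem' := fun {u} hu => hst.neg_mem u hu }
  have hle : AddSubgroup.closure (Set.range fun i => (p i, q i)) ≤ G := by
    rw [AddSubgroup.closure_le]
    rintro _ ⟨i, rfl⟩
    exact hmem i
  have hGcard : Nat.card G = (unitSet σ).card := by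
    have : Nat.card (unitSet σ : Set (QV d n × QV d n)) = (unitSet σ).card := by simp
    exact this
  have hcle : d ^ r ≤ (unitSet σ).card := by
    rw [← hcard, ← hGcard]
    exact Nat.card_le_card_of_injective _ (AddSubgroup.inclusion_injective hle)
  rw [hent, meanState_eq, hst.ent hd]
  apply neg_le_neg
  apply Real.log_le_log (by positivity)
  have hcle' : (d : ℝ) ^ r ≤ (unitSet σ).card := by exact_mod_cast hcle
  rw [le_div_iff₀ (by positivity)]
  refine le_trans (le_of_eq ?_) hcle'
  rw [inv_mul_eq_iff_eq_mul₀ (by positivity), ← pow_add]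
  congr 1; omega

/-- The optimal input state convolves to a stabilizer matrix. -/
lemma conv_stab (hd : Odd d) (g00 g01 g10 g11 : ZMod d) (h00 : g00 ≠ 0) (h11 : g11 ≠ 0)
    (hdet : g00 * g11 - g01 * g10 ≠ 0) (σ : Mat d n) (S : Finset (QV d n × QV d n)) :
    conv d n g00 g01 g10 g11
      (stabMat (pull (-(g10 * g11⁻¹)) (g01 * g00⁻¹) S) (fun _ => 1)) σ =
    stabMat (pull (-((g00 * g11 - g01 * g10)⁻¹ * g10)) g01 S)
      (fun v => xi d n σ (scl (-((g00 * g11 - g01 * g10)⁻¹ * g10)) g01 v)) := by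
  have hN0 : (g00 * g11 - g01 * g10)⁻¹ ≠ 0 := inv_ne_zero hdet
  rw [← convL_apply _ _ _ _ hdet]
  unfold stabMat
  rw [map_smul, LinearMap.smul_apply, map_sum, LinearMap.sum_apply]
  congr 1
  have hs : ∀ v : QV d n × QV d n, scl (-(g10 * g11⁻¹)) (g01 * g00⁻¹)
      (scl ((g00 * g11 - g01 * g10)⁻¹ * g11) g00 v) =
      scl (-((g00 * g11 - g01 * g10)⁻¹ * g10)) g01 v := by
    intro v
    rw [scl_scl]
    congr 1 <;> field_simp
  symm
  refine Finset.sum_nbij' (scl ((g00 * g11 - g01 * g10)⁻¹ * g11) g00)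
    (scl ((g00 * g11 - g01 * g10)⁻¹ * g11)⁻¹ g00⁻¹) ?_ ?_ ?_ ?_ ?_
  · intro v hv; rw [mem_pull] at *; rwa [hs]
  · intro v hv
    rw [mem_pull] at *
    rw [← hs, scl_scl _ _ _ _ v, mul_inv_cancel₀ (mul_ne_zero hN0 h11), mul_inv_cancel₀ h00, scl_one]
    exact hv
  · intro v _
    rw [scl_scl, inv_mul_cancel₀ (mul_ne_zero hN0 h11), inv_mul_cancel₀ h00, scl_one]
  · intro v _
    rw [scl_scl, mul_inv_cancel₀ (mul_ne_zero hN0 h11), mul_inv_cancel₀ h00, scl_one]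
  · intro v _
    rw [one_smul, convL_apply]
    exact (conv_weyl hd g00 g01 g10 g11 hdet h00 h11 σ v).symm

set_option maxHeartbeats 1000000 in
lemma main_bounds (hd : Odd d)
    (g00 g01 g10 g11 : ZMod d) (h00 : g00 ≠ 0) (h01 : g01 ≠ 0)
    (h10 : g10 ≠ 0) (h11 : g11 ≠ 0) (hdet : g00 * g11 - g01 * g10 ≠ 0)
    (σ : Mat d n) (hσ : IsState d n σ) :
    (n : ℝ) * Real.log d - vnEnt (meanState d n σ) ≤
        holevoCap d n (fun ρ => conv d n g00 g01 g10 g11 ρ σ) ∧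
      holevoCap d n (fun ρ => conv d n g00 g01 g10 g11 ρ σ) ≤
        (n : ℝ) * Real.log d - vnEnt σ := by
  have hB : 0 ≤ (n : ℝ) * Real.log d - vnEnt σ := sub_nonneg.2 (vnEnt_le σ hσ)
  have hub : ∀ (m : ℕ) (p : Fin m → ℝ) (ρs : Fin m → Mat d n),
      ((∀ i, 0 ≤ p i) ∧ ∑ i, p i = 1 ∧ ∀ i, IsState d n (ρs i)) →
      vnEnt (∑ i, (p i : ℂ) • conv d n g00 g01 g10 g11 (ρs i) σ) -
        ∑ i, p i * vnEnt (conv d n g00 g01 g10 g11 (ρs i) σ) ≤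
        (n : ℝ) * Real.log d - vnEnt σ := by
    rintro m p ρs ⟨hp, hs, hρ⟩
    have h1 := vnEnt_le _ (state_sum hp hs fun i => conv_state g00 g01 g10 g11 hdet (hρ i) hσ)
    have h2 : vnEnt σ ≤ ∑ i, p i * vnEnt (conv d n g00 g01 g10 g11 (ρs i) σ) := by
      calc vnEnt σ = ∑ i, p i * vnEnt σ := by rw [← Finset.sum_mul, hs, one_mul]
        _ ≤ _ := Finset.sum_le_sum fun i _ =>
          mul_le_mul_of_nonneg_left (conv_ent _ _ _ _ hdet h01 h10 (hρ i) hσ) (hp i)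
    linarith
  refine ⟨?_, cap_le (fun ρ => conv d n g00 g01 g10 g11 ρ σ) _ hB hub⟩
  have hst := unitSet_stab hd hσ
  have hN0 : (g00 * g11 - g01 * g10)⁻¹ ≠ 0 := inv_ne_zero hdet
  have hT := (hst.pull (a := -(g10 * g11⁻¹)) (b := g01 * g00⁻¹)
    (neg_ne_zero.2 (mul_ne_zero h10 (inv_ne_zero h11))) (mul_ne_zero h01 (inv_ne_zero h00))).one
  have hx : -((g00 * g11 - g01 * g10)⁻¹ * g10) ≠ 0 := neg_ne_zero.2 (mul_ne_zero hN0 h10)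
  have hT2 := hst.pull hx h01
  set ρ : Mat d n := stabMat (pull (-(g10 * g11⁻¹)) (g01 * g00⁻¹) (unitSet σ)) (fun _ => 1) with hρdef
  have hρ : IsState d n ρ := hT.state hd
  have hconv : conv d n g00 g01 g10 g11 ρ σ = _ := conv_stab hd g00 g01 g10 g11 h00 h11 hdet σ _
  set A : Mat d n := conv d n g00 g01 g10 g11 ρ σ with hA
  have hAs : IsState d n A := conv_state _ _ _ _ hdet hρ hσ
  have hAsq := hT2.sq hd
  rw [← hconv, card_pull hx h01] at hAsq
  have hM : vnEnt (meanState d n σ) = -Real.log (((unitSet σ).card : ℝ) / (d : ℝ) ^ n) := by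
    rw [meanState_eq, hst.ent hd]
  have hdc : (d : ℂ) ≠ 0 := dcne
  have hdr : (d : ℝ) ≠ 0 := dpos.ne'
  set P : ℝ := ((d : ℝ) ^ n * (d : ℝ) ^ n)⁻¹ with hP
  have key := le_cap' (fun ρ => conv d n g00 g01 g10 g11 ρ σ) _ hB hub (ι := QV d n × QV d n) (fun _ => P)
    (fun v => weyl d n v.1 v.2 * ρ * (weyl d n v.1 v.2)ᴴ) (fun _ => by positivity)
    (by
      rw [Finset.sum_const, Finset.card_univ, Fintype.card_prod, card_QV, nsmul_eq_mul, hP]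
      push_cast
      field_simp)
    (fun v => conj_state hd hρ v)
  simp only [conv_cov _ _ _ _ hdet, ← hA] at key
  rw [← Finset.smul_sum, weyl_avg h00 (mul_ne_zero hN0 h11), hAs.2, mul_one, smul_smul] at key
  have hP2 : (P : ℂ) * (d : ℂ) ^ n = ((d : ℂ) ^ n)⁻¹ := by
    rw [hP]; push_cast; field_simp
  rw [hP2, vnEnt_max] at key
  simp only [conj_ent hd hAs _ hAsq] at key
  rw [Finset.sum_const, Finset.card_univ, Fintype.card_prod, card_QV, nsmul_eq_mul] at key
  have hP3 : ((d ^ n * d ^ n : ℕ) : ℝ) * (P * -Real.log (((unitSet σ).card : ℝ) / (d : ℝ) ^ n)) =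
      -Real.log (((unitSet σ).card : ℝ) / (d : ℝ) ^ n) := by
    rw [← mul_assoc, hP]
    push_cast
    rw [mul_inv_cancel₀ (by positivity), one_mul]
  rw [hP3, ← hM] at key
  exact key

end final


/-- Holevo capacity bounds: for every state `σ`,
`n log d - H(M(σ)) ≤ χ(E_σ) ≤ n log d - H(σ)`, and if `σ` is an MSPS then
`χ(E_σ) = n log d - H(σ)`, where `E_σ : ρ ↦ ρ ⊠ σ`. -/
theorem statement16 (d n : ℕ) [Fact (Nat.Prime d)] (hd : Odd d) (hn : 1 ≤ n)
    (g00 g01 g10 g11 : ZMod d) (h00 : g00 ≠ 0) (h01 : g01 ≠ 0)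
    (h10 : g10 ≠ 0) (h11 : g11 ≠ 0) (hdet : g00 * g11 - g01 * g10 ≠ 0)
    (σ : Mat d n) (hσ : IsState d n σ) :
    ((n : ℝ) * Real.log d - vnEnt (meanState d n σ) ≤
        holevoCap d n (fun ρ => conv d n g00 g01 g10 g11 ρ σ) ∧
      holevoCap d n (fun ρ => conv d n g00 g01 g10 g11 ρ σ) ≤
        (n : ℝ) * Real.log d - vnEnt σ) ∧
    (IsMSPS d n σ →
      holevoCap d n (fun ρ => conv d n g00 g01 g10 g11 ρ σ) =
        (n : ℝ) * Real.log d - vnEnt σ) := by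
  have h := main_bounds hd g00 g01 g10 g11 h00 h01 h10 h11 hdet σ hσ
  refine ⟨h, fun hm => le_antisymm h.2 ?_⟩
  have := msps_ent hd hσ hm
  linarith [h.1]

end PaperQI
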